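/- Let d ≥ 2 be an integer, γ > 1 a real number, and c = γ − d − 1. Suppose the reals p, r, ν, κ satisfy: p > 1, r > 1, 1/r = 2/p + (2ν+κ)/d − 1, κ < d/r, ((d−1)/2)(1 − 2/p) < ν < d(p−1)/p, 2r ≥ p, max{ν,κ} > 0, ν + κ ≥ (d−1)(1/r − 1/p), and max{0, d + p(c+ν)} < d(r−p)/r + p(ν+κ+1) < γ p (r−1)/r. Then for every β ∈ (0,1) the class RL^p_{u_ν} is invariant under R_β: if ϑ ∈ RL^p_{u_ν}, then the integrals defining R_β[ϑ](η) converge absolutely for a.e. η and R_β[ϑ] ∈ RL^p_{u_ν}. -/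

import Mathlib

open MeasureTheory Set RealInnerProductSpace
open scoped ENNReal NNReal

noncomputable section

/-- `ℝ^d` with the Euclidean norm. -/
abbrev Ed (d : ℕ) := EuclideanSpace ℝ (Fin d)

/-- `ℂ^d` with the Euclidean norm. -/
abbrev EdC (d : ℕ) := EuclideanSpace ℂ (Fin d)

/-- A function on `ℝ^d` is radial if its value depends only on the norm of the argument. -/
def IsRadial {d : ℕ} {α : Type*} (f : Ed d → α) : Prop :=
  ∀ x y : Ed d, ‖x‖ = ‖y‖ → f x = f y

/-- The pairing `⟨η, v⟩` of a real vector with a complex vector, extended ℂ-bilinearly. -/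
def pairC {d : ℕ} (η : Ed d) (v : EdC d) : ℂ := ∑ i, (η i : ℂ) * v i

/-- The Leray projection `P_η v = v − (⟨v,η⟩/|η|²) η`, extended ℂ-bilinearly. -/
def lerayC {d : ℕ} (η : Ed d) (v : EdC d) : EdC d :=
  (WithLp.equiv 2 (Fin d → ℂ)).symm
    (fun i => v i - (pairC η v / ((‖η‖ ^ 2 : ℝ) : ℂ)) * (η i : ℂ))

/-- The integrand of the nonlinear part of the renormalization operator (complex fields). -/
def renormKernelC (d : ℕ) (γ : ℝ) (ϑ : Ed d → EdC d) (η : Ed d) (t : ℝ) (x : Ed d) : EdC d :=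
  (t ^ (-(γ - d - 1)) * Real.exp (‖η‖ ^ γ * (1 - t ^ γ))) •
    (pairC η (ϑ (t • η - x)) • lerayC η (ϑ x))

/-- Absolute convergence of the integrals defining `R_β[ϑ](η)` (complex fields). -/
def RenormDefinedC (d : ℕ) (γ β : ℝ) (ϑ : Ed d → EdC d) (η : Ed d) : Prop :=
  IntegrableOn (fun q : ℝ × Ed d => renormKernelC d γ ϑ η q.1 q.2)
    (Set.Ioc (1 : ℝ) β⁻¹ ×ˢ Set.univ)

/-- The renormalization operator `R_β` on complex vector fields. -/
def renormC (d : ℕ) (γ β : ℝ) (ϑ : Ed d → EdC d) (η : Ed d) : EdC d :=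
  (β ^ (γ - d - 1) * Real.exp (‖η‖ ^ γ * (1 - β ^ (-γ)))) • ϑ (β⁻¹ • η)
    + (Complex.I * (γ : ℂ)) •
        ∫ t in Set.Ioc (1 : ℝ) β⁻¹, ∫ x : Ed d, renormKernelC d γ ϑ η t x

/-- The Leray projection `P_η v = v − (⟨v,η⟩/|η|²) η` for real vector fields. -/
def lerayR {d : ℕ} (η v : Ed d) : Ed d := v - (⟪v, η⟫ / ‖η‖ ^ 2) • η

/-- The integrand of the nonlinear part of the renormalization operator (real fields). -/
def renormKernelR (d : ℕ) (γ : ℝ) (ψ : Ed d → Ed d) (η : Ed d) (t : ℝ) (x : Ed d) : Ed d :=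
  (t ^ (-(γ - d - 1)) * Real.exp (‖η‖ ^ γ * (1 - t ^ γ))) •
    (⟪η, ψ (t • η - x)⟫ • lerayR η (ψ x))

/-- Absolute convergence of the integrals defining `R_β[ψ](η)` (real fields). -/
def RenormDefinedR (d : ℕ) (γ β : ℝ) (ψ : Ed d → Ed d) (η : Ed d) : Prop :=
  IntegrableOn (fun q : ℝ × Ed d => renormKernelR d γ ψ η q.1 q.2)
    (Set.Ioc (1 : ℝ) β⁻¹ ×ˢ Set.univ)

/-- The renormalization operator `R_β` on real vector fields. -/
def renormR (d : ℕ) (γ β : ℝ) (ψ : Ed d → Ed d) (η : Ed d) : Ed d :=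
  (β ^ (γ - d - 1) * Real.exp (‖η‖ ^ γ * (1 - β ^ (-γ)))) • ψ (β⁻¹ • η)
    - γ • ∫ t in Set.Ioc (1 : ℝ) β⁻¹, ∫ x : Ed d, renormKernelR d γ ψ η t x

/-- First coordinate (`x_{d-1}`) of the projection onto the azimuthal plane. -/
def azim1 {d : ℕ} (x : Ed d) : ℝ := if h : d - 2 < d then x ⟨d - 2, h⟩ else 0

/-- Second coordinate (`x_d`) of the projection onto the azimuthal plane. -/
def azim2 {d : ℕ} (x : Ed d) : ℝ := if h : d - 1 < d then x ⟨d - 1, h⟩ else 0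

/-- The norm `|x_a|` of the azimuthal projection. -/
def normA {d : ℕ} (x : Ed d) : ℝ := Real.sqrt (azim1 x ^ 2 + azim2 x ^ 2)

/-- `cos∠_η(x) = ⟨x_a, η_a⟩ / (|x_a| |η_a|)`. -/
def cosAng {d : ℕ} (η x : Ed d) : ℝ :=
  (azim1 x * azim1 η + azim2 x * azim2 η) / (normA x * normA η)

/-- `sin∠_η(x) = (η_{d−1} x_d − η_d x_{d−1}) / (|x_a| |η_a|)`. -/
def sinAng {d : ℕ} (η x : Ed d) : ℝ :=
  (azim1 η * azim2 x - azim2 η * azim1 x) / (normA x * normA η)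

/-- The integrand of the nonlinear part of the azimuthal renormalization operator. -/
def aKernel (d : ℕ) (γ : ℝ) (ψ : Ed d → ℝ) (η : Ed d) (t : ℝ) (x : Ed d) : ℝ :=
  t ^ (-(γ - d - 1)) * Real.exp (‖η‖ ^ γ * (1 - t ^ γ)) *
    (ψ x * ψ (t • η - x) * cosAng η x * sinAng η (t • η - x))

/-- Absolute convergence of the integrals defining the azimuthal `R_β[ψ](η)`. -/
def ARenormDefined (d : ℕ) (γ β : ℝ) (ψ : Ed d → ℝ) (η : Ed d) : Prop :=
  IntegrableOn (fun q : ℝ × Ed d => aKernel d γ ψ η q.1 q.2)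
    (Set.Ioc (1 : ℝ) β⁻¹ ×ˢ Set.univ)

/-- The azimuthal renormalization operator `R_β` on scalar functions. -/
def arenorm (d : ℕ) (γ β : ℝ) (ψ : Ed d → ℝ) (η : Ed d) : ℝ :=
  β ^ (γ - d - 1) * Real.exp (‖η‖ ^ γ * (1 - β ^ (-γ))) * ψ (β⁻¹ • η)
    + γ * normA η * ∫ t in Set.Ioc (1 : ℝ) β⁻¹, ∫ x : Ed d, aKernel d γ ψ η t x

/-- Weighted `L^p` norm `(∫ |f|^p w^p)^{1/p}` of a scalar function, valued in `ℝ≥0∞`. -/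
def wLpNorm {d : ℕ} (w : Ed d → ℝ) (p : ℝ) (f : Ed d → ℝ) : ℝ≥0∞ :=
  (∫⁻ x : Ed d, ENNReal.ofReal (|f x| ^ p * w x ^ p)) ^ (1 / p)

/-- Weighted `L^p` norm of a `ℂ^d`-valued function, valued in `ℝ≥0∞`. -/
def wLpNormC {d : ℕ} (w : Ed d → ℝ) (p : ℝ) (f : Ed d → EdC d) : ℝ≥0∞ :=
  (∫⁻ x : Ed d, ENNReal.ofReal (‖f x‖ ^ p * w x ^ p)) ^ (1 / p)

/-- The weight `u_ν(x) = e^{|x|} |x|^ν`. -/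
def uWeight (ν : ℝ) {d : ℕ} (x : Ed d) : ℝ := Real.exp ‖x‖ * ‖x‖ ^ ν

/-- The weight `v_ν(x) = e^{(b/2)|x|} |x|^ν`. -/
def vWeight (b ν : ℝ) {d : ℕ} (x : Ed d) : ℝ := Real.exp (b / 2 * ‖x‖) * ‖x‖ ^ ν

/-- Membership in `RL^p_{u_ν}`: fields dominated a.e. by a radial function in `L^p_{u_ν}`. -/
def MemRL (d : ℕ) (p ν : ℝ) (ϑ : Ed d → EdC d) : Prop :=
  AEStronglyMeasurable ϑ volume ∧ ∃ g : Ed d → ℝ, Measurable g ∧ IsRadial g ∧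
    wLpNorm (uWeight ν) p g < ⊤ ∧ ∀ᵐ x : Ed d, ‖ϑ x‖ ≤ g x

/-- Membership in `RL^p_{u_ν}` with a radial bound of norm at most `A`. -/
def MemRLBall (d : ℕ) (p ν A : ℝ) (ϑ : Ed d → EdC d) : Prop :=
  AEStronglyMeasurable ϑ volume ∧ ∃ g : Ed d → ℝ, Measurable g ∧ IsRadial g ∧
    wLpNorm (uWeight ν) p g ≤ ENNReal.ofReal A ∧ ∀ᵐ x : Ed d, ‖ϑ x‖ ≤ g x

/-- Membership in the set `M` of functions bounded by `k |η|^σ e^{−b|η|}`. -/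
def memM {d : ℕ} (k b σ : ℝ) (ψ : Ed d → ℝ) : Prop :=
  Measurable ψ ∧
    ∀ᵐ η : Ed d, η ≠ 0 → |ψ η| < k * ‖η‖ ^ σ * Real.exp (-b * ‖η‖)

/-- Inclusion of a real vector into `ℂ^d`. -/
def toC {d : ℕ} (v : Ed d) : EdC d :=
  (WithLp.equiv 2 (Fin d → ℂ)).symm (fun i => (v i : ℂ))

/-- The azimuthal unit vector field `e_{d−1}(y) = (0,…,0,−y_d,y_{d−1})/|y_a|`. -/
def azVec (d : ℕ) (y : Ed d) : Ed d :=
  (WithLp.equiv 2 (Fin d → ℝ)).symm (fun i =>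
    if (i : ℕ) = d - 2 then -azim2 y / normA y
    else if (i : ℕ) = d - 1 then azim1 y / normA y
    else 0)

/-- The Leray self-similar ansatz
`v_*(y,t) = i (T−t)^{(d+1−γ)/γ} ψ(y (T−t)^{1/γ}) e_{d−1}(y)`. -/
def vfun (d : ℕ) (γ : ℝ) (ψ : Ed d → ℝ) (T : ℝ) (y : Ed d) (t : ℝ) : EdC d :=
  (Complex.I *
      ((((T - t) ^ (((d : ℝ) + 1 - γ) / γ) * ψ (((T - t) ^ (1 / γ)) • y)) : ℝ) : ℂ)) •
    toC (azVec d y)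

end

/-- Polar coordinates for lower Lebesgue integrals of radial functions. -/
theorem polar_lintegral (n : ℕ) (hn : 1 ≤ n) :
    ∃ C : ℝ≥0∞, C ≠ ⊤ ∧ C ≠ 0 ∧ ∀ φ : ℝ → ℝ≥0∞, Measurable φ →
      ∫⁻ x : EuclideanSpace ℝ (Fin n), φ ‖x‖ =
        C * ∫⁻ r in Ioi (0:ℝ), φ r * ENNReal.ofReal (r ^ (n - 1)) := by
  have : Nonempty (Fin n) := ⟨⟨0, hn⟩⟩
  set E := EuclideanSpace ℝ (Fin n)
  set μ : Measure E := volume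
  have hfr : Module.finrank ℝ E = n := by simp [E]
  refine ⟨μ.toSphere univ, measure_ne_top _ _, ?_, ?_⟩
  · have : μ.toSphere ≠ 0 := Measure.toSphere_ne_zero μ
    exact Measure.measure_univ_ne_zero.2 this
  intro φ hφ
  have key := μ.measurePreserving_homeomorphUnitSphereProd.lintegral_comp_emb
    (Homeomorph.measurableEmbedding _) (fun q => φ (q.2 : ℝ))
  have h0 : ∫⁻ x : E, φ ‖x‖ = ∫⁻ x : ({0}ᶜ : Set E), φ ‖(x:E)‖ ∂(μ.comap (↑)) := by
    rw [lintegral_subtype_comap (measurableSet_singleton _).compl (fun x : E => φ ‖x‖),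
      restrict_compl_singleton]
  rw [h0]
  have h1 : ∫⁻ x : ({0}ᶜ : Set E), φ ‖(x:E)‖ ∂(μ.comap (↑)) =
      ∫⁻ a : ({0}ᶜ : Set E), (fun q : Metric.sphere (0:E) 1 × Ioi (0:ℝ) => φ (q.2 : ℝ)) (homeomorphUnitSphereProd E a) ∂(μ.comap (↑)) := by
    apply lintegral_congr; intro a; simp [homeomorphUnitSphereProd]
  rw [h1, key, lintegral_prod _ (by fun_prop)]
  simp only [lintegral_const]
  rw [mul_comm, Measure.volumeIoiPow, lintegral_withDensity_eq_lintegral_mul _ (by fun_prop) (by fun_prop), hfr]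
  congr 1
  rw [← lintegral_subtype_comap measurableSet_Ioi]
  apply lintegral_congr; intro a
  simp [mul_comm]

theorem exists_rot {E : Type*} [NormedAddCommGroup E] [InnerProductSpace ℝ E] [CompleteSpace E]
    (v w : E) (h : ‖v‖ = ‖w‖) : ∃ R : E ≃ₗᵢ[ℝ] E, R v = w :=
  ⟨Submodule.reflection (Submodule.span ℝ {v - w})ᗮ, Submodule.reflection_sub h⟩

theorem cyl_lintegral (n : ℕ) (f : ℝ → ℝ≥0∞) (hf : Measurable f)
    (y : EuclideanSpace ℝ (Fin (n+1))) :
    ∫⁻ x : EuclideanSpace ℝ (Fin (n+1)), f ‖x‖ * f ‖y - x‖ =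
      ∫⁻ a : ℝ, ∫⁻ z : EuclideanSpace ℝ (Fin n),
        f (Real.sqrt (a^2 + ‖z‖^2)) * f (Real.sqrt ((‖y‖ - a)^2 + ‖z‖^2)) := by
  set e : EuclideanSpace ℝ (Fin (n+1)) := EuclideanSpace.single 0 ‖y‖ with he
  obtain ⟨R, hR⟩ := exists_rot y e (by simp [he])
  have h1 : ∫⁻ x : EuclideanSpace ℝ (Fin (n+1)), f ‖x‖ * f ‖y - x‖ =
      ∫⁻ x : EuclideanSpace ℝ (Fin (n+1)), f ‖x‖ * f ‖e - x‖ := by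
    conv_rhs => rw [← R.measurePreserving.lintegral_comp_emb R.toHomeomorph.measurableEmbedding]
    apply lintegral_congr; intro x
    rw [← hR, ← map_sub, R.norm_map, R.norm_map]
  rw [h1]
  have hΦ : MeasurePreserving (fun x : EuclideanSpace ℝ (Fin (n+1)) =>
      ((x 0, WithLp.toLp 2 (fun i : Fin n => x i.succ)) : ℝ × EuclideanSpace ℝ (Fin n))) := by
    have a1 := PiLp.volume_preserving_ofLp (Fin (n+1))
    have a2 := volume_preserving_piFinSuccAbove (fun _ : Fin (n + 1) => ℝ) 0
    have a3 : MeasurePreserving (Prod.map id (WithLp.toLp 2) : ℝ × (Fin n → ℝ) → ℝ × EuclideanSpace ℝ (Fin n)) :=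
      (MeasurePreserving.id volume).prod (PiLp.volume_preserving_toLp (Fin n))
    exact a3.comp (a2.comp a1)
  have h2 : ∫⁻ x : EuclideanSpace ℝ (Fin (n+1)), f ‖x‖ * f ‖e - x‖ =
      ∫⁻ q : ℝ × EuclideanSpace ℝ (Fin n),
        f (Real.sqrt (q.1^2 + ‖q.2‖^2)) * f (Real.sqrt ((‖y‖ - q.1)^2 + ‖q.2‖^2)) := by
    rw [← hΦ.lintegral_comp (by fun_prop)]
    apply lintegral_congr; intro x
    clear hR h1
    generalize ‖y‖ = s at he
    simp only [EuclideanSpace.norm_eq, Fin.sum_univ_succ]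
    rw [Real.sq_sqrt (Finset.sum_nonneg fun _ _ => by positivity)]
    simp [he]
  rw [h2, Measure.volume_eq_prod, lintegral_prod _ (by fun_prop)]

/-- Squared height of the triangle with sides `s, τ, σ` over the side `s`. -/
noncomputable def hsq (s τ σ : ℝ) : ℝ :=
  (s + τ + σ) * (τ + σ - s) * (s + σ - τ) * (s + τ - σ) / (4 * s ^ 2)

theorem sub_b (a : ℝ) (h : ℝ → ℝ≥0∞) (m : ℕ) (hm : 1 ≤ m) :
    ∫⁻ b in Ioi (0:ℝ), h (Real.sqrt (a^2 + b^2)) * ENNReal.ofReal (b ^ (m - 1)) ≤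
    ∫⁻ τ in Ioi |a|, h τ * ENNReal.ofReal (τ * (τ^2 - a^2) ^ (((m:ℝ) - 2)/2)) := by
  have hsub : Ioi (0:ℝ) ⊆ (fun τ : ℝ => Real.sqrt (τ^2 - a^2)) '' Ioi |a| := by
    intro b hb
    have hb : 0 < b := hb
    refine ⟨Real.sqrt (a^2 + b^2), ?_, ?_⟩
    · rw [mem_Ioi, ← Real.sqrt_sq_eq_abs]
      exact Real.sqrt_lt_sqrt (sq_nonneg _) (by nlinarith)
    · simp only
      rw [Real.sq_sqrt (by positivity)]
      simp [hb.le]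
  have pos : ∀ τ ∈ Ioi |a|, 0 < τ^2 - a^2 ∧ 0 < τ := by
    intro τ hτ
    have h1 : |a| < τ := hτ
    have h2 := abs_nonneg a
    have h3 := sq_abs a
    exact ⟨by nlinarith, by linarith⟩
  refine (lintegral_mono_set hsub).trans ?_
  rw [lintegral_image_eq_lintegral_abs_deriv_mul (f' := fun τ => τ / Real.sqrt (τ^2 - a^2))
    measurableSet_Ioi]
  · refine setLIntegral_mono' measurableSet_Ioi ?_
    intro τ hτ
    obtain ⟨h1, h2⟩ := pos τ hτ
    have h3 : a^2 + Real.sqrt (τ^2 - a^2)^2 = τ^2 := by rw [Real.sq_sqrt h1.le]; ring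
    rw [h3, Real.sqrt_sq h2.le, mul_left_comm, ← ENNReal.ofReal_mul (abs_nonneg _)]
    refine mul_le_mul' le_rfl (ENNReal.ofReal_le_ofReal ?_)
    rw [abs_of_nonneg (by positivity)]
    have h4 : Real.sqrt (τ^2 - a^2) ^ (m-1) = (τ^2-a^2)^(((m:ℝ)-1)/2) := by
      rw [Real.sqrt_eq_rpow, ← Real.rpow_natCast, ← Real.rpow_mul h1.le]
      congr 1; push_cast [hm]; ring
    rw [h4, Real.sqrt_eq_rpow, div_mul_eq_mul_div, mul_div_assoc, ← Real.rpow_sub h1]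
    apply le_of_eq; congr 2; ring
  · intro τ hτ
    obtain ⟨h1, h2⟩ := pos τ hτ
    have := (((hasDerivAt_id τ).pow 2).sub_const (a^2)).sqrt h1.ne'
    refine (HasDerivAt.congr_deriv this ?_).hasDerivWithinAt
    simp
    field_simp
  · intro τ hτ τ' hτ' heq
    obtain ⟨h1, h2⟩ := pos τ hτ
    obtain ⟨h1', h2'⟩ := pos τ' hτ'
    have : τ^2 - a^2 = τ'^2 - a^2 := (Real.sqrt_inj h1.le h1'.le).1 heq
    exact (sq_eq_sq₀ h2.le h2'.le).1 (by linarith)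

theorem sub_a (s τ q : ℝ) (hs : 0 < s) (hτ : 0 < τ) (h : ℝ → ℝ≥0∞) :
    ∫⁻ a in Ioo (-τ) τ, h (Real.sqrt ((s - a)^2 + (τ^2 - a^2))) *
        ENNReal.ofReal (τ * (τ^2 - a^2) ^ q) ≤
    ∫⁻ σ in Ioo |τ - s| (τ + s), h σ * ENNReal.ofReal (hsq s τ σ ^ q * τ * σ / s) := by
  have hsub : Ioo (-τ) τ ⊆ (fun σ : ℝ => (τ^2 + s^2 - σ^2) / (2 * s)) '' Ioo |τ - s| (τ + s) := by
    intro a ha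
    obtain ⟨ha1, ha2⟩ := ha
    have hp : 0 < τ^2 + s^2 - 2 * s * a := by nlinarith [sq_nonneg (τ - s)]
    refine ⟨Real.sqrt (τ^2 + s^2 - 2 * s * a), ⟨?_, ?_⟩, ?_⟩
    · rw [← Real.sqrt_sq_eq_abs]
      exact Real.sqrt_lt_sqrt (sq_nonneg _) (by nlinarith)
    · rw [Real.sqrt_lt' (by linarith)]; nlinarith
    · simp only
      rw [Real.sq_sqrt hp.le]; field_simp; ring
  refine (lintegral_mono_set hsub).trans ?_
  rw [lintegral_image_eq_lintegral_abs_deriv_mul (f' := fun σ => -σ / s)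
    measurableSet_Ioo]
  · refine setLIntegral_mono' measurableSet_Ioo ?_
    intro σ hσ
    have hσ0 : 0 < σ := lt_of_le_of_lt (abs_nonneg _) hσ.1
    have e1 : (s - (τ^2 + s^2 - σ^2) / (2 * s))^2 + (τ^2 - ((τ^2 + s^2 - σ^2) / (2 * s))^2) = σ^2 := by
      field_simp; ring
    have e2 : τ^2 - ((τ^2 + s^2 - σ^2) / (2 * s))^2 = hsq s τ σ := by
      unfold hsq; field_simp; ring
    rw [e1, Real.sqrt_sq hσ0.le, mul_left_comm, ← ENNReal.ofReal_mul (abs_nonneg _), e2]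
    gcongr
    rw [neg_div, abs_neg, abs_of_nonneg (by positivity)]
    apply le_of_eq; ring
  · intro σ hσ
    have := (((hasDerivAt_id σ).pow 2).const_sub (τ^2+s^2)).div_const (2*s)
    refine (HasDerivAt.congr_deriv this ?_).hasDerivWithinAt
    simp
    field_simp
  · intro σ hσ σ' hσ' heq
    have hσ0 : 0 < σ := lt_of_le_of_lt (abs_nonneg _) hσ.1
    have hσ0' : 0 < σ' := lt_of_le_of_lt (abs_nonneg _) hσ'.1
    have : (τ^2 + s^2 - σ^2) = (τ^2 + s^2 - σ'^2) := by
      simp only at heq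
      field_simp at heq
      linarith
    exact (sq_eq_sq₀ hσ0.le hσ0'.le).1 (by linarith)

open Classical in
/-- Radial convolution kernel. -/
noncomputable def triK (q s τ σ : ℝ) : ℝ≥0∞ :=
  if 0 < τ ∧ 0 < σ ∧ τ - σ < s ∧ σ - τ < s ∧ s < τ + σ then
    ENNReal.ofReal (hsq s τ σ ^ q * τ * σ / s) else 0

theorem triK_symm (q s τ σ : ℝ) : triK q s τ σ = triK q s σ τ := by
  unfold triK
  have e1 : hsq s τ σ = hsq s σ τ := by unfold hsq; ring
  have e2 : hsq s σ τ ^ q * τ * σ / s = hsq s σ τ ^ q * σ * τ / s := by ring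
  rw [e1, e2]
  congr 1
  apply propext
  constructor <;> rintro ⟨h1, h2, h3, h4, h5⟩ <;> exact ⟨h2, h1, h4, h3, by linarith⟩

theorem measurable_triK (q : ℝ) : Measurable (fun x : ℝ × ℝ × ℝ => triK q x.1 x.2.1 x.2.2) := by
  unfold triK
  refine Measurable.ite ?_ ?_ measurable_const
  · have m1 : Measurable (fun x : ℝ × ℝ × ℝ => x.1) := by fun_prop
    have m2 : Measurable (fun x : ℝ × ℝ × ℝ => x.2.1) := by fun_prop
    have m3 : Measurable (fun x : ℝ × ℝ × ℝ => x.2.2) := by fun_prop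
    exact (measurableSet_lt measurable_const m2).inter ((measurableSet_lt measurable_const m3).inter
      ((measurableSet_lt (m2.sub m3) m1).inter ((measurableSet_lt (m3.sub m2) m1).inter
        (measurableSet_lt m1 (m2.add m3)))))
  · unfold hsq; fun_prop

theorem conv_bound (n : ℕ) (hn : 1 ≤ n) : ∃ C : ℝ≥0∞, C ≠ ⊤ ∧
    ∀ f : ℝ → ℝ≥0∞, Measurable f → ∀ y : EuclideanSpace ℝ (Fin (n+1)), y ≠ 0 →
    ∫⁻ x : EuclideanSpace ℝ (Fin (n+1)), f ‖x‖ * f ‖y - x‖ ≤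
      C * ∫⁻ τ, ∫⁻ σ, f τ * f σ * triK (((n:ℝ)-2)/2) ‖y‖ τ σ := by
  obtain ⟨C, hC, hC0, hpol⟩ := polar_lintegral n hn
  refine ⟨C, hC, fun f hf y hy => ?_⟩
  have hs : 0 < ‖y‖ := norm_pos_iff.2 hy
  set s := ‖y‖ with hsdef
  set q : ℝ := ((n:ℝ)-2)/2 with hq
  rw [cyl_lintegral n f hf y]
  have h1 : ∀ a : ℝ, ∫⁻ z : EuclideanSpace ℝ (Fin n),
      f (Real.sqrt (a^2 + ‖z‖^2)) * f (Real.sqrt ((s - a)^2 + ‖z‖^2)) ≤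
      C * ∫⁻ τ in Ioi |a|, f τ * f (Real.sqrt ((s - a)^2 + (τ^2 - a^2))) *
        ENNReal.ofReal (τ * (τ^2 - a^2)^q) := by
    intro a
    rw [hpol (fun r => f (Real.sqrt (a^2 + r^2)) * f (Real.sqrt ((s - a)^2 + r^2))) (by fun_prop)]
    refine mul_le_mul' le_rfl ?_
    refine le_trans (le_of_eq ?_) (sub_b a (fun τ => f τ * f (Real.sqrt ((s - a)^2 + (τ^2 - a^2)))) n hn)
    apply lintegral_congr; intro b
    rw [Real.sq_sqrt (by positivity)]
    simp
  calc _ ≤ ∫⁻ a : ℝ, C * ∫⁻ τ in Ioi |a|, f τ * f (Real.sqrt ((s - a)^2 + (τ^2 - a^2))) *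
        ENNReal.ofReal (τ * (τ^2 - a^2)^q) := lintegral_mono h1
    _ = C * ∫⁻ a : ℝ, ∫⁻ τ in Ioi |a|, f τ * f (Real.sqrt ((s - a)^2 + (τ^2 - a^2))) *
        ENNReal.ofReal (τ * (τ^2 - a^2)^q) := lintegral_const_mul' _ _ hC
    _ ≤ _ := ?_
  refine mul_le_mul' le_rfl ?_
  have h2 : ∀ a : ℝ, ∫⁻ τ in Ioi |a|, f τ * f (Real.sqrt ((s - a)^2 + (τ^2 - a^2))) *
        ENNReal.ofReal (τ * (τ^2 - a^2)^q) =
      ∫⁻ τ, {x : ℝ × ℝ | |x.1| < x.2}.indicator (fun x => f x.2 * f (Real.sqrt ((s - x.1)^2 + (x.2^2 - x.1^2))) *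
        ENNReal.ofReal (x.2 * (x.2^2 - x.1^2)^q)) (a, τ) := by
    intro a
    rw [← lintegral_indicator measurableSet_Ioi]
    apply lintegral_congr; intro τ
    simp [indicator]
  rw [lintegral_congr h2]
  rw [lintegral_lintegral_swap]
  swap
  · refine Measurable.aemeasurable ?_
    refine Measurable.indicator (by fun_prop) (measurableSet_lt (by fun_prop) (by fun_prop))
  refine lintegral_mono fun τ => ?_
  simp only
  by_cases hτ : 0 < τ
  swap
  · refine le_trans (le_of_eq ?_) zero_le
    rw [lintegral_eq_zero_iff' (Measurable.aemeasurable (by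
      refine Measurable.comp (g := {x : ℝ × ℝ | |x.1| < x.2}.indicator (fun x => f x.2 * f (Real.sqrt ((s - x.1)^2 + (x.2^2 - x.1^2))) *
        ENNReal.ofReal (x.2 * (x.2^2 - x.1^2)^q))) (Measurable.indicator (by fun_prop) (measurableSet_lt (by fun_prop) (by fun_prop))) (by fun_prop)))]
    filter_upwards with a
    have : ¬ |a| < τ := by have := abs_nonneg a; intro h; linarith
    simp [indicator, this]
  have h3 : ∫⁻ a : ℝ, {x : ℝ × ℝ | |x.1| < x.2}.indicator (fun x => f x.2 * f (Real.sqrt ((s - x.1)^2 + (x.2^2 - x.1^2))) *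
        ENNReal.ofReal (x.2 * (x.2^2 - x.1^2)^q)) (a, τ) =
      f τ * ∫⁻ a in Ioo (-τ) τ, f (Real.sqrt ((s - a)^2 + (τ^2 - a^2))) *
        ENNReal.ofReal (τ * (τ^2 - a^2) ^ q) := by
    rw [← lintegral_const_mul _ (by fun_prop), ← lintegral_indicator measurableSet_Ioo]
    apply lintegral_congr; intro a
    simp [indicator, abs_lt, mul_assoc]
  rw [h3]
  refine (mul_le_mul' le_rfl (sub_a s τ q hs hτ f)).trans (le_of_eq ?_)
  rw [← lintegral_const_mul _ (by unfold hsq; fun_prop), ← lintegral_indicator measurableSet_Ioo]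
  apply lintegral_congr; intro σ
  have hiff : σ ∈ Ioo |τ - s| (τ + s) ↔ (0 < τ ∧ 0 < σ ∧ τ - σ < s ∧ σ - τ < s ∧ s < τ + σ) := by
    rw [mem_Ioo, abs_lt]
    constructor
    · rintro ⟨⟨h1, h2⟩, h3⟩
      exact ⟨hτ, by linarith, by linarith, by linarith, by linarith⟩
    · rintro ⟨_, _, h3, h4, h5⟩
      exact ⟨⟨by linarith, by linarith⟩, by linarith⟩
  unfold triK
  by_cases hin : σ ∈ Ioo |τ - s| (τ + s)
  · rw [indicator_of_mem hin, if_pos (hiff.1 hin), mul_assoc (f τ)]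
  · rw [indicator_of_notMem hin, if_neg (fun h => hin (hiff.2 h)), mul_zero]

open Classical in
theorem conv_bound' (n : ℕ) (hn : 1 ≤ n) : ∃ C : ℝ≥0∞, C ≠ ⊤ ∧
    ∀ f : ℝ → ℝ≥0∞, Measurable f → ∀ y : EuclideanSpace ℝ (Fin (n+1)), y ≠ 0 →
    ∫⁻ x : EuclideanSpace ℝ (Fin (n+1)), f ‖x‖ * f ‖y - x‖ ≤
      C * ∫⁻ τ, ∫⁻ σ, f τ * f σ * (if σ ≤ τ then triK (((n:ℝ)-2)/2) ‖y‖ τ σ else 0) := by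
  obtain ⟨C, hC, h⟩ := conv_bound n hn
  refine ⟨C * 2, ENNReal.mul_ne_top hC (by simp), fun f hf y hy => (h f hf y hy).trans ?_⟩
  rw [mul_assoc]
  refine mul_le_mul' le_rfl ?_
  set q : ℝ := ((n:ℝ)-2)/2
  have hm : Measurable (fun x : ℝ × ℝ => f x.1 * f x.2 * (if x.2 ≤ x.1 then triK q ‖y‖ x.1 x.2 else 0)) := by
    refine Measurable.mul (by fun_prop) (Measurable.ite (measurableSet_le (by fun_prop) (by fun_prop)) ?_ measurable_const)
    exact (measurable_triK q).comp (g := fun x : ℝ × ℝ × ℝ => triK q x.1 x.2.1 x.2.2) (f := fun x : ℝ × ℝ => (‖y‖, x.1, x.2)) (by fun_prop)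
  have hm' : Measurable (fun x : ℝ × ℝ => f x.1 * f x.2 * (if x.1 ≤ x.2 then triK q ‖y‖ x.2 x.1 else 0)) := by
    refine Measurable.mul (by fun_prop) (Measurable.ite (measurableSet_le (by fun_prop) (by fun_prop)) ?_ measurable_const)
    exact (measurable_triK q).comp (g := fun x : ℝ × ℝ × ℝ => triK q x.1 x.2.1 x.2.2) (f := fun x : ℝ × ℝ => (‖y‖, x.2, x.1)) (by fun_prop)
  calc ∫⁻ τ, ∫⁻ σ, f τ * f σ * triK q ‖y‖ τ σ
      ≤ ∫⁻ τ, ∫⁻ σ, (f τ * f σ * (if σ ≤ τ then triK q ‖y‖ τ σ else 0) +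
          f τ * f σ * (if τ ≤ σ then triK q ‖y‖ σ τ else 0)) := by
        refine lintegral_mono fun τ => lintegral_mono fun σ => ?_
        simp only
        rw [← mul_add]
        gcongr
        rcases le_total σ τ with h | h
        · simp [h]
        · rw [triK_symm]; simp [h]
    _ = (∫⁻ τ, ∫⁻ σ, f τ * f σ * (if σ ≤ τ then triK q ‖y‖ τ σ else 0)) +
        ∫⁻ τ, ∫⁻ σ, f τ * f σ * (if τ ≤ σ then triK q ‖y‖ σ τ else 0) := by
        rw [← lintegral_add_left]
        · refine lintegral_congr fun τ => ?_
          rw [lintegral_add_left]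
          exact hm.comp (f := fun σ : ℝ => (τ, σ)) (by fun_prop)
        · exact hm.lintegral_prod_right
    _ = _ := by
        rw [two_mul]
        congr 1
        rw [lintegral_lintegral_swap]
        · refine lintegral_congr fun τ => lintegral_congr fun σ => ?_
          rw [mul_comm (f σ)]
        · exact hm'.aemeasurable

theorem rpow_ratio_bound (q A B : ℝ) (hB : 0 < B) (h1 : B / 4 ≤ A) (h2 : A ≤ 4 * B) :
    A ^ q ≤ 4 ^ |q| * B ^ q := by
  have hA : 0 < A := by linarith
  rcases le_total 0 q with hq | hq
  · rw [abs_of_nonneg hq, ← Real.mul_rpow (by norm_num) hB.le]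
    exact Real.rpow_le_rpow hA.le h2 hq
  · rw [abs_of_nonpos hq, Real.rpow_neg (by norm_num), ← Real.inv_rpow (by norm_num),
      ← Real.mul_rpow (by norm_num) hB.le]
    exact Real.rpow_le_rpow_of_nonpos (by positivity) (by linarith) hq

theorem ker_bound1 (q δ s τ σ : ℝ) (hδ : 0 < δ) (hσ : 0 < σ) (hστ : σ ≤ τ)
    (hu : 0 < τ + σ - s) (hv : 0 < s + σ - τ) :
    s ^ (δ + q + 1) * Real.exp s * (Real.exp (-τ) * τ ^ (-(δ + q + 1))) *
      (Real.exp (-σ) * σ ^ (-(δ + q + 1))) * (hsq s τ σ ^ q * τ * σ / s) ≤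
    (4 ^ |q| * 2 ^ δ) * (σ ^ (-q - δ) * ((τ + σ - s) * (s + σ - τ)) ^ q *
      Real.exp (-(τ + σ - s))) := by
  have hτ : 0 < τ := by linarith
  have hs : 0 < s := by linarith
  have hs2 : s ≤ 2 * τ := by linarith
  have e1 : hsq s τ σ = ((τ + σ - s) * (s + σ - τ)) *
      ((s + τ + σ) * (s + τ - σ) / (4 * s ^ 2)) := by unfold hsq; ring
  have hX : 0 < (τ + σ - s) * (s + σ - τ) := by positivity
  have hA0 : 0 ≤ ((s + τ + σ) * (s + τ - σ) / (4 * s ^ 2)) := by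
    have : 0 ≤ s + τ - σ := by linarith
    positivity
  have hA : ((s + τ + σ) * (s + τ - σ) / (4 * s ^ 2)) ^ q ≤ 4 ^ |q| * (τ / s) ^ q := by
    apply rpow_ratio_bound _ _ _ (by positivity)
    · rw [div_div, div_le_div_iff₀ (by positivity) (by positivity)]
      have : s * τ ≤ (s + τ + σ) * (s + τ - σ) := by nlinarith
      nlinarith
    · rw [← mul_div_assoc, div_le_div_iff₀ (by positivity) (by positivity)]
      have : (s + τ + σ) * (s + τ - σ) ≤ 4 * τ * (2 * s) :=
        mul_le_mul (by linarith) (by linarith) (by linarith) (by linarith)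
      nlinarith
  rw [e1, Real.mul_rpow hX.le hA0]
  set X := ((τ + σ - s) * (s + σ - τ)) ^ q with hXd
  set A := ((s + τ + σ) * (s + τ - σ) / (4 * s ^ 2)) ^ q
  have hX0 : 0 ≤ X := by positivity
  have e2 : Real.exp (-(τ + σ - s)) = Real.exp s * Real.exp (-τ) * Real.exp (-σ) := by
    rw [← Real.exp_add, ← Real.exp_add]; congr 1; ring
  rw [e2]
  have hst : (s / τ) ^ δ ≤ 2 ^ δ :=
    Real.rpow_le_rpow (by positivity) (by rw [div_le_iff₀ hτ]; exact hs2) hδ.le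
  have e3 : s ^ (δ + q + 1) = s ^ δ * s ^ q * s := by
    rw [Real.rpow_add hs, Real.rpow_add hs, Real.rpow_one]
  have e4 : τ ^ (-(δ + q + 1)) = (τ ^ δ)⁻¹ * (τ ^ q)⁻¹ * τ⁻¹ := by
    rw [Real.rpow_neg hτ.le, Real.rpow_add hτ, Real.rpow_add hτ, Real.rpow_one, mul_inv, mul_inv]
  have e5 : σ ^ (-(δ + q + 1)) = σ ^ (-q - δ) * σ⁻¹ := by
    rw [← Real.rpow_neg_one σ, ← Real.rpow_add hσ]; congr 1; ring
  have pτ : 0 < τ ^ q := by positivity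
  have ps : 0 < s ^ q := by positivity
  have pτ' : 0 < τ ^ δ := by positivity
  have ps' : 0 < s ^ δ := by positivity
  calc _ = (A * ((s/τ)^q)) * (s / τ) ^ δ * (σ ^ (-q - δ) * X *
        (Real.exp s * Real.exp (-τ) * Real.exp (-σ))) := by
        rw [e3, e4, e5, Real.div_rpow hs.le hτ.le, Real.div_rpow hs.le hτ.le]
        field_simp
    _ ≤ 4 ^ |q| * 2 ^ δ * (σ ^ (-q - δ) * X *
        (Real.exp s * Real.exp (-τ) * Real.exp (-σ))) := by
        gcongr
        calc A * (s/τ)^q ≤ 4 ^ |q| * (τ / s) ^ q * (s / τ) ^ q := by gcongr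
          _ = 4 ^ |q| := by
            rw [mul_assoc, ← Real.mul_rpow (by positivity) (by positivity)]
            have : τ / s * (s / τ) = 1 := by field_simp
            rw [this, Real.one_rpow, mul_one]

theorem exp_poly_bound (e c : ℝ) (hc : 0 < c) : ∃ C : ℝ, 0 < C ∧ ∀ x : ℝ, 0 ≤ x →
    (1 + x) ^ e * Real.exp (-c * x) ≤ C := by
  have he : 0 < |e| + 1 := by positivity
  set m := c / (|e| + 1) with hm
  have hm0 : 0 < m := by positivity
  refine ⟨(1 + 1 / m) ^ (|e| + 1), by positivity, fun x hx => ?_⟩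
  have h1 : (1 + x) ≤ (1 + 1 / m) * Real.exp (m * x) := by
    have : m * x + 1 ≤ Real.exp (m * x) := Real.add_one_le_exp _
    have h2 : (1 + x) ≤ (1 + 1 / m) * (m * x + 1) := by
      have : (1 + 1 / m) * (m * x + 1) = 1 + x + (m * x + 1 / m) := by field_simp; ring
      have : 0 < m * x + 1 / m := by positivity
      linarith
    exact h2.trans (by gcongr)
  calc (1 + x) ^ e * Real.exp (-c * x) ≤ (1 + x) ^ (|e| + 1) * Real.exp (-c * x) := by
        gcongr
        · linarith
        · linarith [le_abs_self e]
    _ ≤ ((1 + 1 / m) * Real.exp (m * x)) ^ (|e| + 1) * Real.exp (-c * x) := by gcongr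
    _ = (1 + 1 / m) ^ (|e| + 1) := by
        rw [Real.mul_rpow (by positivity) (by positivity), ← Real.exp_mul, mul_assoc, ← Real.exp_add]
        have : m * x * (|e| + 1) + -c * x = 0 := by rw [hm]; field_simp; ring
        rw [this]; simp

theorem min_bound (q u v σ : ℝ) (hu : 0 < u) (hv : 0 < v) (h : u + v = 2 * σ) :
    (u * v) ^ q ≤ 4 ^ |q| * σ ^ q * min u v ^ q := by
  have hσ : 0 < σ := by linarith
  rw [← min_mul_max, mul_comm, Real.mul_rpow (by positivity) (by positivity)]
  gcongr
  apply rpow_ratio_bound _ _ _ hσ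
  · rcases le_total u v with h' | h'
    · rw [max_eq_right h']; linarith
    · rw [max_eq_left h']; linarith
  · exact max_le (by linarith) (by linarith)

theorem ker_low (q δ u v σ : ℝ) (hu : 0 < u) (hv : 0 < v) (h : u + v = 2 * σ) :
    σ ^ (-q - δ) * (u * v) ^ q * Real.exp (-u) ≤ 4 ^ |q| * (σ ^ (-δ) * (u ^ q + v ^ q)) := by
  have hσ : 0 < σ := by linarith
  have h1 := min_bound q u v σ hu hv h
  have h2 : min u v ^ q ≤ u ^ q + v ^ q := by
    have := Real.rpow_pos_of_pos hu q
    have := Real.rpow_pos_of_pos hv q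
    rcases min_choice u v with h | h <;> rw [h] <;> linarith
  have h3 : Real.exp (-u) ≤ 1 := by simpa using hu.le
  have e : σ ^ (-q - δ) = (σ ^ q)⁻¹ * σ ^ (-δ) := by
    rw [← Real.rpow_neg hσ.le, ← Real.rpow_add hσ]; congr 1
  have pσ : 0 < σ ^ q := by positivity
  calc _ ≤ σ ^ (-q - δ) * (4 ^ |q| * σ ^ q * (u ^ q + v ^ q)) * 1 := by gcongr; exact h1.trans (by gcongr)
    _ = _ := by rw [e]; field_simp

theorem ker_high (q δ : ℝ) : ∃ C : ℝ, 0 < C ∧ ∀ u v σ : ℝ, 0 < u → 0 < v → u + v = 2 * σ →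
    σ ^ (-q - δ) * (u * v) ^ q * Real.exp (-u) ≤ C * (σ ^ (-δ) * Real.exp (-u/4) *
      (Real.exp (-u/8) * u ^ (-(max (-q) 0)) + Real.exp (-v/8) * v ^ (-(max (-q) 0)))) := by
  obtain ⟨C, hC, hb⟩ := exp_poly_bound |q| (5/8) (by norm_num)
  refine ⟨4 ^ |q| * C, by positivity, fun u v σ hu hv h => ?_⟩
  have hσ : 0 < σ := by linarith
  have h1 := min_bound q u v σ hu hv h
  set χ := max (-q) 0
  set m := min u v with hm
  have hm0 : 0 < m := lt_min hu hv
  have h2 : m ^ q * Real.exp (-u) ≤ C * (Real.exp (-u/4) * (Real.exp (-m/8) * m ^ (-χ))) := by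
    have : m ^ q * Real.exp (-(5/8)*m) ≤ C * m ^ (-χ) := by
      rcases le_total 0 q with hq | hq
      · have : χ = 0 := max_eq_right (by linarith)
        rw [this]; simp
        refine le_trans ?_ (hb m hm0.le)
        rw [abs_of_nonneg hq]
        have : m ^ q ≤ (1 + m) ^ q := Real.rpow_le_rpow hm0.le (by linarith) hq
        rw [neg_mul]
        gcongr
      · have : χ = -q := max_eq_left (by linarith)
        rw [this, neg_neg, mul_comm]
        gcongr
        refine le_trans ?_ (hb m hm0.le)
        have : 1 ≤ (1 + m) ^ |q| := Real.one_le_rpow (by linarith) (abs_nonneg _)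
        have := Real.exp_pos (-(5/8) * m)
        nlinarith
    have e : Real.exp (-u) ≤ Real.exp (-u/4) * Real.exp (-m/8) * Real.exp (-(5/8)*m) := by
      rw [← Real.exp_add, ← Real.exp_add]
      apply Real.exp_le_exp.2
      have : m ≤ u := min_le_left _ _
      linarith
    have := Real.exp_pos (-u/4)
    have := Real.exp_pos (-m/8)
    calc m ^ q * Real.exp (-u) ≤ m ^ q * (Real.exp (-u/4) * Real.exp (-m/8) * Real.exp (-(5/8)*m)) := by gcongr
      _ = (Real.exp (-u/4) * Real.exp (-m/8)) * (m ^ q * Real.exp (-(5/8)*m)) := by ring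
      _ ≤ (Real.exp (-u/4) * Real.exp (-m/8)) * (C * m ^ (-χ)) := by gcongr
      _ = _ := by ring
  have h3 : Real.exp (-m/8) * m ^ (-χ) ≤ Real.exp (-u/8) * u ^ (-χ) + Real.exp (-v/8) * v ^ (-χ) := by
    have : 0 < Real.exp (-u/8) * u ^ (-χ) := by positivity
    have : 0 < Real.exp (-v/8) * v ^ (-χ) := by positivity
    rcases min_choice u v with h | h <;> rw [hm, h] <;> linarith
  have e : σ ^ (-q - δ) = (σ ^ q)⁻¹ * σ ^ (-δ) := by
    rw [← Real.rpow_neg hσ.le, ← Real.rpow_add hσ]; congr 1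
  have pσ : 0 < σ ^ q := by positivity
  calc _ ≤ σ ^ (-q - δ) * (4 ^ |q| * σ ^ q * m ^ q) * Real.exp (-u) := by gcongr
    _ = 4 ^ |q| * σ ^ (-δ) * (m ^ q * Real.exp (-u)) := by rw [e]; field_simp
    _ ≤ 4 ^ |q| * σ ^ (-δ) * (C * (Real.exp (-u/4) * (Real.exp (-u/8) * u ^ (-χ) + Real.exp (-v/8) * v ^ (-χ)))) := by
      exact mul_le_mul_of_nonneg_left (h2.trans (by gcongr)) (by positivity)
    _ = _ := by ring

theorem young_lintegral (p : ℝ) (hp : 1 < p) (F l : ℝ → ℝ≥0∞) (hF : Measurable F) (hl : Measurable l) :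
    ∫⁻ s, (∫⁻ τ, F τ * l (τ - s)) ^ p ≤ (∫⁻ x, l x) ^ p * ∫⁻ τ, F τ ^ p := by
  have hp0 : 0 < p := by linarith
  have hp1 : 0 ≤ 1 / p := by positivity
  have hp2 : 0 ≤ 1 - 1 / p := by
    rw [sub_nonneg, div_le_one hp0]; exact hp.le
  have h1 : ∀ s, (∫⁻ τ, F τ * l (τ - s)) ^ p ≤
      (∫⁻ τ, F τ ^ p * l (τ - s)) * (∫⁻ x, l x) ^ (p - 1) := by
    intro s
    have := ENNReal.lintegral_mul_norm_pow_le (μ := volume) (f := fun τ => F τ ^ p * l (τ - s))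
      (g := fun τ => l (τ - s)) (by fun_prop) (by fun_prop) hp1 hp2 (by ring)
    have e : ∀ τ, (F τ ^ p * l (τ - s)) ^ (1 / p) * l (τ - s) ^ (1 - 1 / p) = F τ * l (τ - s) := by
      intro τ
      rw [ENNReal.mul_rpow_of_nonneg _ _ hp1, ← ENNReal.rpow_mul, mul_one_div_cancel hp0.ne',
        ENNReal.rpow_one, mul_assoc, ← ENNReal.rpow_add_of_nonneg _ _ hp1 hp2]
      simp
    simp only [e] at this
    rw [lintegral_sub_right_eq_self] at this
    refine (ENNReal.rpow_le_rpow this hp0.le).trans (le_of_eq ?_)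
    rw [ENNReal.mul_rpow_of_nonneg _ _ hp0.le, ← ENNReal.rpow_mul, ← ENNReal.rpow_mul,
      one_div_mul_cancel hp0.ne', ENNReal.rpow_one]
    congr 2
    field_simp
  refine (lintegral_mono h1).trans ?_
  rw [lintegral_mul_const _ (by
    exact Measurable.lintegral_prod_right (f := fun s τ : ℝ => F τ ^ p * l (τ - s)) (by fun_prop))]
  rw [lintegral_lintegral_swap (by fun_prop)]
  have h2 : ∀ τ, ∫⁻ s, F τ ^ p * l (τ - s) = F τ ^ p * ∫⁻ x, l x := by
    intro τ
    rw [lintegral_const_mul _ (by fun_prop), lintegral_sub_left_eq_self l]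
  simp_rw [h2]
  rw [lintegral_mul_const _ (by fun_prop), mul_assoc, mul_comm]
  refine mul_le_mul' (le_of_eq ?_) le_rfl
  nth_rewrite 1 [← ENNReal.rpow_one (∫⁻ x, l x)]
  rw [← ENNReal.rpow_add_of_nonneg _ _ (by norm_num) (by linarith)]
  congr 1; ring

open Classical in
noncomputable def psiK (q σ x : ℝ) : ℝ≥0∞ :=
  if 0 < x ∧ x ≤ 2 * σ then ENNReal.ofReal (x ^ q) else 0

theorem measurable_psiK (q : ℝ) : Measurable (fun x : ℝ × ℝ => psiK q x.1 x.2) := by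
  unfold psiK
  refine Measurable.ite ?_ (by fun_prop) measurable_const
  exact (measurableSet_lt measurable_const measurable_snd).inter
    (measurableSet_le measurable_snd (measurable_fst.const_mul 2))

theorem Measurable.psiK' {α : Type*} [MeasurableSpace α] (q : ℝ) {f g : α → ℝ} (hf : Measurable f)
    (hg : Measurable g) : Measurable (fun x => psiK q (f x) (g x)) :=
  (measurable_psiK q).comp (hf.prodMk hg)

theorem lintegral_psiK (q σ : ℝ) (hq : -1 < q) (hσ : 0 < σ) :
    ∫⁻ x, psiK q σ x = ENNReal.ofReal ((2 * σ) ^ (q + 1) / (q + 1)) := by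
  have h1 : ∫⁻ x, psiK q σ x = ∫⁻ x in Ioc 0 (2 * σ), ENNReal.ofReal (x ^ q) := by
    rw [← lintegral_indicator measurableSet_Ioc]
    apply lintegral_congr; intro x
    simp [psiK, indicator]
  have hi : IntervalIntegrable (fun x : ℝ => x ^ q) volume 0 (2 * σ) :=
    intervalIntegral.intervalIntegrable_rpow' hq
  rw [intervalIntegrable_iff_integrableOn_Ioc_of_le (by positivity)] at hi
  rw [h1, ← ofReal_integral_eq_lintegral_ofReal hi, ← intervalIntegral.integral_of_le (by positivity),
    integral_rpow (Or.inl hq), Real.zero_rpow (by linarith), sub_zero]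
  filter_upwards [ae_restrict_mem measurableSet_Ioc] with x hx
  exact Real.rpow_nonneg hx.1.le q

noncomputable def phiK (χ x : ℝ) : ℝ≥0∞ :=
  (Ioi (0:ℝ)).indicator (fun x => ENNReal.ofReal (Real.exp (-x / 8) * x ^ (-χ))) x

@[fun_prop]
theorem measurable_phiK (χ : ℝ) : Measurable (phiK χ) := by
  unfold phiK
  exact Measurable.indicator (by fun_prop) measurableSet_Ioi

theorem lintegral_phiK (χ b : ℝ) (hb : 0 < b) (hχ : χ * b < 1) : ∫⁻ x, phiK χ x ^ b < ⊤ := by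
  have h1 : ∫⁻ x, phiK χ x ^ b = ∫⁻ x in Ioi 0, ENNReal.ofReal (x ^ (-(χ * b)) * Real.exp (-(b/8) * x ^ (1:ℝ))) := by
    rw [← lintegral_indicator measurableSet_Ioi]
    apply lintegral_congr; intro x
    unfold phiK
    by_cases hx : x ∈ Ioi (0:ℝ)
    · have hx0 : 0 < x := hx
      rw [indicator_of_mem hx, indicator_of_mem hx, ENNReal.ofReal_rpow_of_pos (by positivity),
        Real.mul_rpow (by positivity) (by positivity), ← Real.exp_mul, ← Real.rpow_mul hx0.le, mul_comm,
        Real.rpow_one]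
      congr 3 <;> ring
    · rw [indicator_of_notMem hx, indicator_of_notMem hx, ENNReal.zero_rpow_of_pos hb]
  rw [h1]
  have := integrableOn_rpow_mul_exp_neg_mul_rpow (p := 1) (s := -(χ * b)) (b := b/8) (by linarith) one_pos (by positivity)
  exact this.lintegral_lt_top

/-- Low part of the radial kernel. -/
noncomputable def KL (q δ s τ σ : ℝ) : ℝ≥0∞ :=
  (Ioc (0:ℝ) 1).indicator (fun σ => ENNReal.ofReal (σ ^ (-δ))) σ *
    (psiK q σ (σ + (τ - s)) + psiK q σ (σ - (τ - s)))

theorem low_part (p : ℝ) (hp : 1 < p) (q δ : ℝ) (hq : -1 < q) (hqδ : -(1 - 1 / p) < q + 1 - δ)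
    (F : ℝ → ℝ≥0∞) (hF : Measurable F) (hFp : ∫⁻ τ, F τ ^ p < ⊤) :
    ∃ l : ℝ → ℝ≥0∞, Measurable l ∧ ∫⁻ x, l x < ⊤ ∧
      ∀ s, ∫⁻ τ, ∫⁻ σ, F τ * F σ * KL q δ s τ σ = ∫⁻ τ, F τ * l (τ - s) := by
  have hp0 : 0 < p := by linarith
  have hp1 : 0 ≤ 1 / p := by positivity
  have hp2 : 0 < 1 - 1 / p := by
    rw [sub_pos, div_lt_one hp0]; exact hp
  set w : ℝ → ℝ≥0∞ := (Ioc (0:ℝ) 1).indicator (fun σ => ENNReal.ofReal (σ ^ (-δ))) with hw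
  have hwm : Measurable w := Measurable.indicator (by fun_prop) measurableSet_Ioc
  have hm : Measurable (fun x : ℝ × ℝ => F x.2 * (w x.2 * (psiK q x.2 (x.2 + x.1) + psiK q x.2 (x.2 - x.1)))) := by
    have a1 := Measurable.psiK' q (f := fun x : ℝ × ℝ => x.2) (g := fun x => x.2 + x.1) (by fun_prop) (by fun_prop)
    have a2 := Measurable.psiK' q (f := fun x : ℝ × ℝ => x.2) (g := fun x => x.2 - x.1) (by fun_prop) (by fun_prop)
    fun_prop
  refine ⟨fun x => ∫⁻ σ, F σ * (w σ * (psiK q σ (σ + x) + psiK q σ (σ - x))), ?_, ?_, ?_⟩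
  · exact hm.lintegral_prod_right
  · rw [lintegral_lintegral_swap hm.aemeasurable]
    have h1 : ∀ σ, ∫⁻ x, F σ * (w σ * (psiK q σ (σ + x) + psiK q σ (σ - x))) =
        F σ * (w σ * (2 * ∫⁻ x, psiK q σ x)) := by
      intro σ
      have m1 : Measurable (fun x => psiK q σ (σ + x)) := Measurable.psiK' q (by fun_prop) (by fun_prop)
      have m2 : Measurable (fun x => psiK q σ (σ - x)) := Measurable.psiK' q (by fun_prop) (by fun_prop)
      rw [lintegral_const_mul _ (by fun_prop), lintegral_const_mul _ (by fun_prop),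
        lintegral_add_left m1, lintegral_add_left_eq_self (fun x => psiK q σ x),
        lintegral_sub_left_eq_self (fun x => psiK q σ x), two_mul]
    simp_rw [h1]
    set e : ℝ := (q + 1 - δ) with he
    set C : ℝ := 2 ^ (q + 1) / (q + 1) with hC
    have hC0 : 0 ≤ C := div_nonneg (by positivity) (by linarith)
    set W : ℝ → ℝ≥0∞ := (Ioc (0:ℝ) 1).indicator (fun σ => ENNReal.ofReal (σ ^ (e / (1 - 1 / p)))) with hW
    have h2 : ∀ σ, F σ * (w σ * (2 * ∫⁻ x, psiK q σ x)) = (2 * ENNReal.ofReal C) * ((F σ ^ p) ^ (1 / p) * (W σ) ^ (1 - 1 / p)) := by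
      intro σ
      rw [← ENNReal.rpow_mul, mul_one_div_cancel hp0.ne', ENNReal.rpow_one]
      by_cases hσ : σ ∈ Ioc (0:ℝ) 1
      · have hσ0 := hσ.1
        rw [hw, hW, indicator_of_mem hσ, indicator_of_mem hσ, lintegral_psiK q σ hq hσ0,
          ENNReal.ofReal_rpow_of_pos (by positivity), ← Real.rpow_mul hσ0.le, div_mul_cancel₀ _ hp2.ne',
          Real.mul_rpow (by norm_num) hσ0.le, mul_div_right_comm, ENNReal.ofReal_mul hC0]
        have : ENNReal.ofReal (σ ^ e) = ENNReal.ofReal (σ ^ (-δ)) * ENNReal.ofReal (σ ^ (q + 1)) := by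
          rw [← ENNReal.ofReal_mul (by positivity), ← Real.rpow_add hσ0]; congr 2; rw [he]; ring
        rw [this]; ring
      · rw [hw, hW, indicator_of_notMem hσ, indicator_of_notMem hσ, ENNReal.zero_rpow_of_pos hp2]
        simp
    have hWm : Measurable W := Measurable.indicator (by fun_prop) measurableSet_Ioc
    simp_rw [h2]
    rw [lintegral_const_mul _ (by fun_prop)]
    refine ENNReal.mul_lt_top (by finiteness) ?_
    refine (ENNReal.lintegral_mul_norm_pow_le (by fun_prop) (by fun_prop) hp1 hp2.le (by ring)).trans_lt ?_
    have hWi : ∫⁻ σ, W σ < ⊤ := by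
      rw [hW, lintegral_indicator measurableSet_Ioc]
      have hi : IntervalIntegrable (fun x : ℝ => x ^ (e / (1 - 1 / p))) volume 0 1 :=
        intervalIntegral.intervalIntegrable_rpow' (by rw [lt_div_iff₀ hp2]; linarith)
      rw [intervalIntegrable_iff_integrableOn_Ioc_of_le (by positivity)] at hi
      exact hi.lintegral_lt_top
    refine ENNReal.mul_lt_top ?_ ?_
    · exact ENNReal.rpow_lt_top_of_nonneg hp1 hFp.ne
    · exact ENNReal.rpow_lt_top_of_nonneg hp2.le hWi.ne
  · intro s
    refine lintegral_congr fun τ => ?_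
    simp only
    have hm2 : Measurable (fun σ => F σ * (w σ * (psiK q σ (σ + (τ - s)) + psiK q σ (σ - (τ - s))))) :=
      hm.comp (f := fun σ : ℝ => (τ - s, σ)) (by fun_prop)
    rw [← lintegral_const_mul _ hm2]
    refine lintegral_congr fun σ => ?_
    simp only [KL, hw, mul_assoc]

noncomputable def Zop (β γ : ℝ) (X : ℝ → ℝ≥0∞) (ρ : ℝ) : ℝ≥0∞ :=
  ∫⁻ s in Ioc ρ (ρ / β), ENNReal.ofReal (Real.exp (ρ ^ γ - s ^ γ)) * X s

theorem pow_diff (γ ρ s : ℝ) (hγ : 1 < γ) (hρ : 0 < ρ) (hs : ρ ≤ s) :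
    ρ ^ (γ - 1) * (s - ρ) ≤ s ^ γ - ρ ^ γ := by
  have hs0 : 0 < s := by linarith
  have e1 : s ^ γ = s ^ (γ - 1) * s := by
    rw [← Real.rpow_add_one hs0.ne']; congr 1; ring
  have e2 : ρ ^ γ = ρ ^ (γ - 1) * ρ := by
    rw [← Real.rpow_add_one hρ.ne']; congr 1; ring
  have h : ρ ^ (γ - 1) ≤ s ^ (γ - 1) := Real.rpow_le_rpow hρ.le hs (by linarith)
  rw [e1, e2]
  nlinarith

theorem E_low (γ ρ s : ℝ) (hγ : 1 < γ) (hρ : 0 < ρ) (hs : ρ ≤ s) :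
    Real.exp (ρ ^ γ - s ^ γ) ≤ Real.exp (1 - (s - ρ)) := by
  apply Real.exp_le_exp.2
  rcases le_total 1 ρ with h1 | h1
  · have h2 : 1 ≤ ρ ^ (γ - 1) := Real.one_le_rpow h1 (by linarith)
    have h3 := pow_diff γ ρ s hγ hρ hs
    nlinarith
  · have h2 : ρ ^ γ ≤ 1 := Real.rpow_le_one hρ.le h1 (by linarith)
    have h3 : ρ ^ γ ≤ s ^ γ := Real.rpow_le_rpow hρ.le hs (by linarith)
    rcases le_total s 1 with h4 | h4
    · linarith
    · have : s ≤ s ^ γ := by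
        simpa using Real.rpow_le_rpow_of_exponent_le h4 hγ.le
      linarith

theorem Z_low (p : ℝ) (hp : 1 < p) (β γ : ℝ) (hγ : 1 < γ)
    (F l X : ℝ → ℝ≥0∞) (hF : Measurable F) (hl : Measurable l) (hFp : ∫⁻ τ, F τ ^ p < ⊤)
    (hli : ∫⁻ x, l x < ⊤) (hX : ∀ s, X s = ∫⁻ τ, F τ * l (τ - s)) :
    ∫⁻ ρ in Ioi 0, Zop β γ X ρ ^ p < ⊤ := by
  have hXm : Measurable X := by
    have : X = fun s => ∫⁻ τ, F τ * l (τ - s) := funext hX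
    rw [this]
    exact Measurable.lintegral_prod_right (f := fun s τ : ℝ => F τ * l (τ - s)) (by fun_prop)
  have hp0 : 0 < p := by linarith
  have hXp : ∫⁻ s, X s ^ p < ⊤ := by
    simp_rw [hX]
    refine (young_lintegral p hp F l hF hl).trans_lt (ENNReal.mul_lt_top ?_ hFp)
    exact ENNReal.rpow_lt_top_of_nonneg hp0.le hli.ne
  set η : ℝ → ℝ≥0∞ := (Ioi (0:ℝ)).indicator (fun x => ENNReal.ofReal (Real.exp (1 - x))) with hη
  have hηm : Measurable η := Measurable.indicator (by fun_prop) measurableSet_Ioi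
  have hηi : ∫⁻ x, η x < ⊤ := by
    rw [hη, lintegral_indicator measurableSet_Ioi]
    have h := (integrableOn_exp_neg_Ioi 0).const_mul (Real.exp 1)
    refine lt_of_le_of_lt (le_of_eq ?_) h.lintegral_lt_top
    refine lintegral_congr fun x => ?_
    rw [← Real.exp_add]; congr 2
  have h1 : ∀ ρ ∈ Ioi (0:ℝ), Zop β γ X ρ ^ p ≤ (∫⁻ s, X s * η (s - ρ)) ^ p := by
    intro ρ hρ
    refine ENNReal.rpow_le_rpow ?_ hp0.le
    unfold Zop
    rw [← lintegral_indicator measurableSet_Ioc]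
    refine lintegral_mono fun s => ?_
    by_cases hs : s ∈ Ioc ρ (ρ / β)
    · rw [indicator_of_mem hs, mul_comm]
      refine mul_le_mul' le_rfl ?_
      have : s - ρ ∈ Ioi (0:ℝ) := by simpa using hs.1
      rw [hη, indicator_of_mem this]
      exact ENNReal.ofReal_le_ofReal (E_low γ ρ s hγ hρ hs.1.le)
    · rw [indicator_of_notMem hs]; exact zero_le
  refine (setLIntegral_mono' measurableSet_Ioi h1).trans_lt ?_
  refine (setLIntegral_le_lintegral _ _).trans_lt ?_
  refine (young_lintegral p hp X η hXm hηm).trans_lt (ENNReal.mul_lt_top ?_ hXp)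
  exact ENNReal.rpow_lt_top_of_nonneg hp0.le hηi.ne

theorem E_int (β γ : ℝ) (hβ : β ∈ Ioo (0:ℝ) 1) (hγ : 1 < γ) : ∃ C : ℝ, 0 < C ∧ ∀ ρ : ℝ, 0 < ρ →
    ∫⁻ s in Ioc ρ (ρ / β), ENNReal.ofReal (Real.exp (ρ ^ γ - s ^ γ)) ≤
      ENNReal.ofReal (C * (1 + ρ) ^ (1 - γ)) := by
  have hβ0 := hβ.1
  refine ⟨2 ^ (γ - 1) * (1 + 1 / β), by positivity, fun ρ hρ => ?_⟩
  have key : ∀ x : ℝ, 0 < x → 1 + ρ ≤ 2 * x → x ^ (1 - γ) ≤ 2 ^ (γ - 1) * (1 + ρ) ^ (1 - γ) := by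
    intro x hx h
    have e : (2:ℝ) ^ (γ - 1) = (1/2) ^ (1 - γ) := by
      rw [one_div, Real.inv_rpow (by norm_num), ← Real.rpow_neg (by norm_num)]; congr 1; ring
    rw [e, ← Real.mul_rpow (by norm_num) (by positivity)]
    exact Real.rpow_le_rpow_of_nonpos (by positivity) (by linarith) (by linarith)
  have hP : 0 < (2:ℝ) ^ (γ - 1) * (1 + ρ) ^ (1 - γ) := by positivity
  have hb : 0 < 1 / β := by positivity
  rcases le_total 1 ρ with h1 | h1
  · have h2 : ∀ s ∈ Ioc ρ (ρ / β), ENNReal.ofReal (Real.exp (ρ ^ γ - s ^ γ)) ≤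
        ENNReal.ofReal (Real.exp (ρ ^ (γ - 1) * ρ) * Real.exp (-(ρ ^ (γ - 1)) * s)) := by
      intro s hs
      apply ENNReal.ofReal_le_ofReal
      rw [← Real.exp_add]
      apply Real.exp_le_exp.2
      have := pow_diff γ ρ s hγ hρ hs.1.le
      linarith
    have hpos : 0 < ρ ^ (γ - 1) := by positivity
    refine (setLIntegral_mono' measurableSet_Ioc h2).trans ?_
    refine (lintegral_mono_set Ioc_subset_Ioi_self).trans ?_
    have hi := (integrableOn_exp_mul_Ioi (a := -(ρ ^ (γ - 1))) (by linarith) ρ).const_mul (Real.exp (ρ ^ (γ - 1) * ρ))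
    rw [← ofReal_integral_eq_lintegral_ofReal hi (by filter_upwards with s; positivity)]
    apply ENNReal.ofReal_le_ofReal
    rw [integral_const_mul, integral_exp_mul_Ioi (by linarith)]
    have e : Real.exp (ρ ^ (γ - 1) * ρ) * (-Real.exp (-ρ ^ (γ - 1) * ρ) / -ρ ^ (γ - 1)) = ρ ^ (1 - γ) := by
      rw [neg_div_neg_eq, ← mul_div_assoc, ← Real.exp_add, show 1 - γ = -(γ - 1) by ring, Real.rpow_neg hρ.le]
      simp
    rw [e]
    have := key ρ hρ (by linarith)
    nlinarith
  · have h2 : ∀ s ∈ Ioc ρ (ρ / β), ENNReal.ofReal (Real.exp (ρ ^ γ - s ^ γ)) ≤ 1 := by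
      intro s hs
      rw [← ENNReal.ofReal_one]
      apply ENNReal.ofReal_le_ofReal
      rw [Real.exp_le_one_iff]
      have h3 : ρ ^ γ ≤ s ^ γ := Real.rpow_le_rpow hρ.le hs.1.le (by linarith)
      linarith
    refine (setLIntegral_mono' measurableSet_Ioc h2).trans ?_
    rw [setLIntegral_one, Real.volume_Ioc]
    apply ENNReal.ofReal_le_ofReal
    have := key 1 one_pos (by linarith)
    rw [Real.one_rpow] at this
    have : ρ / β ≤ 1 / β := by gcongr
    nlinarith

theorem Z_high (p : ℝ) (hp : 1 < p) (β γ : ℝ) (hβ : β ∈ Ioo (0:ℝ) 1) (hγ : 1 < γ) (e0 lam : ℝ)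
    (he0 : 0 ≤ e0) (hl0 : 0 ≤ lam) (hl1 : lam < 1) (he : e0 - (γ - 1) * (1 - lam) < - (1 / p))
    (Q X : ℝ → ℝ≥0∞) (hQ : Measurable Q) (hQi : ∫⁻ s, Q s < ⊤) (C : ℝ≥0∞) (hC : C ≠ ⊤)
    (hX : ∀ s, 0 < s → X s ≤ C * ENNReal.ofReal ((1 + s) ^ e0) * Q s ^ lam) :
    ∫⁻ ρ in Ioi 0, Zop β γ X ρ ^ p < ⊤ := by
  have hβ0 := hβ.1
  have hp0 : 0 < p := by linarith
  obtain ⟨A, hA, hE⟩ := E_int β γ hβ hγ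
  set I := ∫⁻ s, Q s with hI
  set D : ℝ≥0∞ := C * ENNReal.ofReal ((1 / β) ^ e0 * A ^ (1 - lam)) * I ^ lam with hD
  have hDt : D < ⊤ := by
    refine ENNReal.mul_lt_top (ENNReal.mul_lt_top hC.lt_top ENNReal.ofReal_lt_top) ?_
    exact ENNReal.rpow_lt_top_of_nonneg hl0 hQi.ne
  set m : ℝ := e0 - (γ - 1) * (1 - lam) with hm
  have h1 : ∀ ρ ∈ Ioi (0:ℝ), Zop β γ X ρ ^ p ≤ D ^ p * ENNReal.ofReal ((1 + ‖ρ‖) ^ (-(-m * p))) := by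
    intro ρ hρ
    have hρ : 0 < ρ := hρ
    have hZ : Zop β γ X ρ ≤ D * ENNReal.ofReal ((1 + ρ) ^ m) := by
      unfold Zop
      have h2 : ∀ s ∈ Ioc ρ (ρ / β), ENNReal.ofReal (Real.exp (ρ ^ γ - s ^ γ)) * X s ≤
          (C * ENNReal.ofReal ((1 / β * (1 + ρ)) ^ e0)) *
            (ENNReal.ofReal (Real.exp (ρ ^ γ - s ^ γ)) ^ (1 - lam) * Q s ^ lam) := by
        intro s hs
        have hs0 : 0 < s := hρ.trans hs.1
        have h3 : ENNReal.ofReal (Real.exp (ρ ^ γ - s ^ γ)) ≤ ENNReal.ofReal (Real.exp (ρ ^ γ - s ^ γ)) ^ (1 - lam) := by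
          have h4 : ENNReal.ofReal (Real.exp (ρ ^ γ - s ^ γ)) ≤ 1 := by
            rw [← ENNReal.ofReal_one]
            apply ENNReal.ofReal_le_ofReal
            rw [Real.exp_le_one_iff]
            have h3 : ρ ^ γ ≤ s ^ γ := Real.rpow_le_rpow hρ.le hs.1.le (by linarith)
            linarith
          have := ENNReal.rpow_le_rpow_of_exponent_ge h4 (show 1 - lam ≤ 1 by linarith)
          rwa [ENNReal.rpow_one] at this
        have h5 : (1 + s) ^ e0 ≤ (1 / β * (1 + ρ)) ^ e0 := by
          apply Real.rpow_le_rpow (by positivity) _ he0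
          have : s ≤ ρ / β := hs.2
          have h1b : 1 ≤ 1 / β := by rw [le_div_iff₀ hβ0]; linarith [hβ.2]
          have : ρ / β = 1 / β * ρ := by ring
          nlinarith
        calc _ ≤ ENNReal.ofReal (Real.exp (ρ ^ γ - s ^ γ)) ^ (1 - lam) *
              (C * ENNReal.ofReal ((1 / β * (1 + ρ)) ^ e0) * Q s ^ lam) := by
              refine mul_le_mul' h3 ((hX s hs0).trans ?_)
              gcongr
          _ = _ := by ring
      refine (setLIntegral_mono' measurableSet_Ioc h2).trans ?_
      rw [lintegral_const_mul _ (by fun_prop)]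
      refine (mul_le_mul' le_rfl (ENNReal.lintegral_mul_norm_pow_le (by fun_prop) (by fun_prop)
        (by linarith) hl0 (by ring))).trans ?_
      have h6 : (∫⁻ s in Ioc ρ (ρ / β), ENNReal.ofReal (Real.exp (ρ ^ γ - s ^ γ))) ^ (1 - lam) ≤
          ENNReal.ofReal (A ^ (1 - lam) * (1 + ρ) ^ ((1 - γ) * (1 - lam))) := by
        refine (ENNReal.rpow_le_rpow (hE ρ hρ) (by linarith)).trans (le_of_eq ?_)
        rw [ENNReal.ofReal_rpow_of_nonneg (by positivity) (by linarith), Real.mul_rpow (by positivity) (by positivity),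
          ← Real.rpow_mul (by positivity)]
      have h7 : (∫⁻ s in Ioc ρ (ρ / β), Q s) ^ lam ≤ I ^ lam :=
        ENNReal.rpow_le_rpow (setLIntegral_le_lintegral _ _) hl0
      refine (mul_le_mul' le_rfl (mul_le_mul' h6 h7)).trans (le_of_eq ?_)
      have e1 : ENNReal.ofReal ((1 + ρ) ^ m) = ENNReal.ofReal ((1 + ρ) ^ e0) *
          ENNReal.ofReal ((1 + ρ) ^ ((1 - γ) * (1 - lam))) := by
        rw [← ENNReal.ofReal_mul (by positivity), ← Real.rpow_add (by positivity)]
        congr 2; rw [hm]; ring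
      rw [e1, hD, Real.mul_rpow (by positivity) (by positivity), ENNReal.ofReal_mul (by positivity),
        ENNReal.ofReal_mul (by positivity), ENNReal.ofReal_mul (by positivity)]
      ring
    refine (ENNReal.rpow_le_rpow hZ hp0.le).trans (le_of_eq ?_)
    rw [ENNReal.mul_rpow_of_nonneg _ _ hp0.le, ENNReal.ofReal_rpow_of_pos (by positivity),
      ← Real.rpow_mul (by positivity), Real.norm_of_nonneg hρ.le]
    congr 3; ring
  refine (setLIntegral_mono' measurableSet_Ioi h1).trans_lt ?_
  rw [lintegral_const_mul _ (by fun_prop)]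
  refine ENNReal.mul_lt_top (ENNReal.rpow_lt_top_of_nonneg hp0.le hDt.ne) ?_
  refine (setLIntegral_le_lintegral _ _).trans_lt ?_
  have hmp : 1 < -m * p := by
    have : 1 / p < -m := by linarith
    rwa [div_lt_iff₀ hp0] at this
  have := integrable_one_add_norm (E := ℝ) (μ := volume) (r := -m * p) (by simpa using hmp)
  exact this.lintegral_lt_top

noncomputable def kk (χ s τ σ : ℝ) : ℝ≥0∞ := phiK χ (τ + σ - s) + phiK χ (s + σ - τ)

open Classical in
/-- High part of the radial kernel. -/
noncomputable def KH (δ χ s τ σ : ℝ) : ℝ≥0∞ :=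
  if 1 < σ ∧ σ ≤ τ ∧ 0 < τ + σ - s then
    ENNReal.ofReal (σ ^ (-δ) * Real.exp (-(τ + σ - s) / 4)) * kk χ s τ σ else 0

theorem Measurable.kk' {α : Type*} [MeasurableSpace α] (χ : ℝ) {f g h : α → ℝ} (hf : Measurable f)
    (hg : Measurable g) (hh : Measurable h) : Measurable (fun x => kk χ (f x) (g x) (h x)) := by
  unfold kk
  fun_prop

theorem kk_rpow_le (χ b : ℝ) (hb : 1 ≤ b) (s τ σ : ℝ) :
    kk χ s τ σ ^ b ≤ 2 ^ (b - 1) * (phiK χ (τ + σ - s) ^ b + phiK χ (s + σ - τ) ^ b) :=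
  ENNReal.rpow_add_le_mul_rpow_add_rpow _ _ hb

noncomputable def Mk (χ b : ℝ) : ℝ≥0∞ := 2 ^ (b - 1) * (2 * ∫⁻ x, phiK χ x ^ b)

theorem Mk_lt_top (χ b : ℝ) (hb : 1 ≤ b) (hχ : χ * b < 1) : Mk χ b < ⊤ := by
  unfold Mk
  have := lintegral_phiK χ b (by linarith) hχ
  refine ENNReal.mul_lt_top ?_ (ENNReal.mul_lt_top (by simp) this)
  exact ENNReal.rpow_lt_top_of_nonneg (by linarith) (by simp)

theorem kk_int_tau (χ b : ℝ) (hb : 1 ≤ b) (s σ : ℝ) : ∫⁻ τ, kk χ s τ σ ^ b ≤ Mk χ b := by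
  refine (lintegral_mono fun τ => kk_rpow_le χ b hb s τ σ).trans (le_of_eq ?_)
  rw [lintegral_const_mul _ (by fun_prop), lintegral_add_left (by fun_prop)]
  have e1 := lintegral_add_right_eq_self (μ := volume) (fun x => phiK χ x ^ b) (σ - s)
  have e2 := lintegral_sub_left_eq_self (μ := volume) (fun x => phiK χ x ^ b) (s + σ)
  simp only [← add_sub_assoc] at e1
  rw [e1, e2, Mk, two_mul]

theorem kk_int_sig (χ b : ℝ) (hb : 1 ≤ b) (s τ : ℝ) : ∫⁻ σ, kk χ s τ σ ^ b ≤ Mk χ b := by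
  refine (lintegral_mono fun σ => kk_rpow_le χ b hb s τ σ).trans (le_of_eq ?_)
  rw [lintegral_const_mul _ (by fun_prop), lintegral_add_left (by fun_prop)]
  have e1 := lintegral_add_left_eq_self (μ := volume) (fun x => phiK χ x ^ b) (τ - s)
  have e2 := lintegral_add_left_eq_self (μ := volume) (fun x => phiK χ x ^ b) (s - τ)
  simp only [show ∀ x y z : ℝ, x - y + z = x + z - y from fun x y z => by ring] at e1 e2
  rw [e1, e2, Mk, two_mul]

theorem kk_int_s (χ b : ℝ) (hb : 1 ≤ b) (τ σ : ℝ) : ∫⁻ s, kk χ s τ σ ^ b ≤ Mk χ b := by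
  refine (lintegral_mono fun s => kk_rpow_le χ b hb s τ σ).trans (le_of_eq ?_)
  rw [lintegral_const_mul _ (by fun_prop), lintegral_add_left (by fun_prop)]
  have e1 := lintegral_sub_left_eq_self (μ := volume) (fun x => phiK χ x ^ b) (τ + σ)
  have e2 := lintegral_add_right_eq_self (μ := volume) (fun x => phiK χ x ^ b) (σ - τ)
  simp only [← add_sub_assoc] at e2
  rw [e1, e2, Mk, two_mul]

theorem int_tau_F (χ b : ℝ) (hb : 1 ≤ b) (s : ℝ) (G : ℝ → ℝ≥0∞) (hG : Measurable G) :
    ∫⁻ z : ℝ × ℝ, G z.1 * kk χ s z.1 z.2 ^ b ≤ Mk χ b * ∫⁻ x, G x := by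
  have hk := Measurable.kk' χ (f := fun z : ℝ × ℝ => s) (g := fun z => z.1) (h := fun z => z.2) (by fun_prop) (by fun_prop) (by fun_prop)
  rw [Measure.volume_eq_prod, lintegral_prod _ (by fun_prop), ← lintegral_const_mul _ hG]
  refine lintegral_mono fun τ => ?_
  have hk2 := Measurable.kk' χ (f := fun z : ℝ => s) (g := fun z => τ) (h := fun z => z) (by fun_prop) (by fun_prop) (by fun_prop)
  simp only
  rw [lintegral_const_mul _ (by fun_prop), mul_comm]
  exact mul_le_mul' (kk_int_sig χ b hb s τ) le_rfl

theorem int_sig_F (χ b : ℝ) (hb : 1 ≤ b) (s : ℝ) (G : ℝ → ℝ≥0∞) (hG : Measurable G) :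
    ∫⁻ z : ℝ × ℝ, G z.2 * kk χ s z.1 z.2 ^ b ≤ Mk χ b * ∫⁻ x, G x := by
  have hk := Measurable.kk' χ (f := fun z : ℝ × ℝ => s) (g := fun z => z.1) (h := fun z => z.2) (by fun_prop) (by fun_prop) (by fun_prop)
  rw [Measure.volume_eq_prod, lintegral_prod_symm _ (by fun_prop), ← lintegral_const_mul _ hG]
  refine lintegral_mono fun σ => ?_
  have hk2 := Measurable.kk' χ (f := fun z : ℝ => s) (g := fun z => z) (h := fun z => σ) (by fun_prop) (by fun_prop) (by fun_prop)
  simp only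
  rw [lintegral_const_mul _ (by fun_prop), mul_comm]
  exact mul_le_mul' (kk_int_tau χ b hb s σ) le_rfl

/-- High part, `p < 2`. -/
theorem high_lt (p : ℝ) (hp : 1 < p) (δ χ b : ℝ) (hδ : 0 < δ) (hb : 1 ≤ b) (hχ : χ * b < 1)
    (hbp : 2 * (1 - 1 / p) ≤ 1 / b) (F : ℝ → ℝ≥0∞) (hF : Measurable F) (hFp : ∫⁻ τ, F τ ^ p < ⊤) :
    ∃ (Q : ℝ → ℝ≥0∞) (C : ℝ≥0∞), Measurable Q ∧ ∫⁻ s, Q s < ⊤ ∧ C ≠ ⊤ ∧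
      ∀ s, ∫⁻ τ, ∫⁻ σ, F τ * F σ * KH δ χ s τ σ ≤ C * Q s ^ (1 / b - 2 * (1 - 1 / p)) := by
  have hp0 : 0 < p := by linarith
  have hb0 : 0 < b := by linarith
  have hp2 : 0 < 1 - 1 / p := by
    rw [sub_pos, div_lt_one hp0]; exact hp
  have hb1 : 0 ≤ 1 - 1 / b := by
    rw [sub_nonneg, div_le_one hb0]; exact hb
  set I := ∫⁻ τ, F τ ^ p with hI
  set M := Mk χ b with hM
  have hMt : M < ⊤ := Mk_lt_top χ b hb hχ
  set lam := 1 / b - 2 * (1 - 1 / p) with hlam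
  have hl0 : 0 ≤ lam := by linarith
  have hQm : Measurable (fun x : ℝ × (ℝ × ℝ) => F x.2.1 ^ p * F x.2.2 ^ p * kk χ x.1 x.2.1 x.2.2 ^ b) := by
    have hk := Measurable.kk' χ (f := fun z : ℝ × ℝ × ℝ => z.1) (g := fun z => z.2.1) (h := fun z => z.2.2) (by fun_prop) (by fun_prop) (by fun_prop)
    fun_prop
  refine ⟨fun s => ∫⁻ z : ℝ × ℝ, F z.1 ^ p * F z.2 ^ p * kk χ s z.1 z.2 ^ b,
    (M * I) ^ (1 - 1 / p) * (M * I) ^ (1 - 1 / p) * (I * I) ^ (1 - 1 / b), ?_, ?_, ?_, ?_⟩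
  · exact hQm.lintegral_prod_right
  · rw [lintegral_lintegral_swap hQm.aemeasurable]
    have h1 : ∀ z : ℝ × ℝ, ∫⁻ s, F z.1 ^ p * F z.2 ^ p * kk χ s z.1 z.2 ^ b ≤ F z.1 ^ p * F z.2 ^ p * M := by
      intro z
      have hk2 := Measurable.kk' χ (f := fun s : ℝ => s) (g := fun s => z.1) (h := fun s => z.2) (by fun_prop) (by fun_prop) (by fun_prop)
      rw [lintegral_const_mul _ (by fun_prop)]
      exact mul_le_mul' le_rfl (kk_int_s χ b hb _ _)
    refine (lintegral_mono h1).trans_lt ?_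
    rw [lintegral_mul_const _ (by fun_prop), Measure.volume_eq_prod, lintegral_prod_mul (f := fun x => F x ^ p) (g := fun x => F x ^ p) (by fun_prop) (by fun_prop)]
    exact ENNReal.mul_lt_top (ENNReal.mul_lt_top hFp hFp) hMt
  · have a1 : (M * I) ^ (1 - 1 / p) ≠ ⊤ :=
      (ENNReal.rpow_lt_top_of_nonneg hp2.le (ENNReal.mul_lt_top hMt hFp).ne).ne
    have a2 : (I * I) ^ (1 - 1 / b) ≠ ⊤ :=
      (ENNReal.rpow_lt_top_of_nonneg hb1 (ENNReal.mul_lt_top hFp hFp).ne).ne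
    exact ENNReal.mul_ne_top (ENNReal.mul_ne_top a1 a1) a2
  · intro s
    have hk := Measurable.kk' χ (f := fun z : ℝ × ℝ => s) (g := fun z => z.1) (h := fun z => z.2) (by fun_prop) (by fun_prop) (by fun_prop)
    have h1 : ∫⁻ τ, ∫⁻ σ, F τ * F σ * KH δ χ s τ σ ≤ ∫⁻ z : ℝ × ℝ, F z.1 * F z.2 * kk χ s z.1 z.2 := by
      rw [Measure.volume_eq_prod, lintegral_prod _ (by fun_prop)]
      refine lintegral_mono fun τ => lintegral_mono fun σ => ?_
      refine mul_le_mul' le_rfl ?_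
      unfold KH
      split_ifs with h
      · obtain ⟨h1, h2, h3⟩ := h
        refine (mul_le_mul' ?_ le_rfl).trans (le_of_eq (one_mul _))
        rw [← ENNReal.ofReal_one]
        apply ENNReal.ofReal_le_ofReal
        have a1 : σ ^ (-δ) ≤ 1 := Real.rpow_le_one_of_one_le_of_nonpos h1.le (by linarith)
        have a2 : Real.exp (-(τ + σ - s) / 4) ≤ 1 := by rw [Real.exp_le_one_iff]; linarith
        exact mul_le_one₀ a1 (by positivity) a2
      · exact zero_le
    refine h1.trans ?_
    have hH := ENNReal.lintegral_prod_norm_pow_le (μ := (volume : Measure (ℝ × ℝ))) (Finset.univ : Finset (Fin 4))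
      (f := ![fun z => F z.1 ^ p * F z.2 ^ p * kk χ s z.1 z.2 ^ b, fun z => F z.1 ^ p * kk χ s z.1 z.2 ^ b,
        fun z => F z.2 ^ p * kk χ s z.1 z.2 ^ b, fun z => F z.1 ^ p * F z.2 ^ p])
      (p := ![lam, 1 - 1 / p, 1 - 1 / p, 1 - 1 / b])
      (by intro i _; fin_cases i <;> simp <;> fun_prop)
      (by simp [Fin.sum_univ_four, hlam]; ring)
      (by intro i _; fin_cases i
          · exact hl0
          · exact hp2.le
          · exact hp2.le
          · exact hb1)
    simp only [Fin.prod_univ_four, Matrix.cons_val] at hH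
    have e : ∀ x y k : ℝ≥0∞, (x ^ p * y ^ p * k ^ b) ^ lam * (x ^ p * k ^ b) ^ (1 - 1 / p) *
        (y ^ p * k ^ b) ^ (1 - 1 / p) * (x ^ p * y ^ p) ^ (1 - 1 / b) = x * y * k := by
      intro x y k
      simp only [ENNReal.mul_rpow_of_nonneg _ _ hl0, ENNReal.mul_rpow_of_nonneg _ _ hp2.le,
        ENNReal.mul_rpow_of_nonneg _ _ hb1, ← ENNReal.rpow_mul]
      have ex : ∀ x : ℝ≥0∞, x ^ (p * lam) * x ^ (p * (1 - 1 / p)) * x ^ (p * (1 - 1 / b)) = x := by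
        intro x
        rw [← ENNReal.rpow_add_of_nonneg _ _ (by positivity) (by positivity),
          ← ENNReal.rpow_add_of_nonneg _ _ (by positivity) (by positivity)]
        have : p * lam + p * (1 - 1 / p) + p * (1 - 1 / b) = 1 := by
          rw [hlam]; field_simp; ring
        rw [this, ENNReal.rpow_one]
      have ek : k ^ (b * lam) * k ^ (b * (1 - 1 / p)) * k ^ (b * (1 - 1 / p)) = k := by
        rw [← ENNReal.rpow_add_of_nonneg _ _ (by positivity) (by positivity),
          ← ENNReal.rpow_add_of_nonneg _ _ (by positivity) (by positivity)]
        have : b * lam + b * (1 - 1 / p) + b * (1 - 1 / p) = 1 := by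
          rw [hlam]; field_simp; ring
        rw [this, ENNReal.rpow_one]
      calc _ = (x ^ (p * lam) * x ^ (p * (1 - 1 / p)) * x ^ (p * (1 - 1 / b))) *
            (y ^ (p * lam) * y ^ (p * (1 - 1 / p)) * y ^ (p * (1 - 1 / b))) *
            (k ^ (b * lam) * k ^ (b * (1 - 1 / p)) * k ^ (b * (1 - 1 / p))) := by ring
        _ = _ := by rw [ex, ex, ek]
    simp only [e] at hH
    refine hH.trans ?_
    have b1 := ENNReal.rpow_le_rpow (int_tau_F χ b hb s (fun x => F x ^ p) (by fun_prop)) hp2.le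
    have b2 := ENNReal.rpow_le_rpow (int_sig_F χ b hb s (fun x => F x ^ p) (by fun_prop)) hp2.le
    have b3 : ∫⁻ z : ℝ × ℝ, F z.1 ^ p * F z.2 ^ p = I * I := by
      rw [Measure.volume_eq_prod, lintegral_prod_mul (f := fun x => F x ^ p) (g := fun x => F x ^ p) (by fun_prop) (by fun_prop)]
    rw [b3]
    refine (mul_le_mul' (mul_le_mul' (mul_le_mul' le_rfl b1) b2) le_rfl).trans (le_of_eq ?_)
    ring

/-- High part, `p ≥ 2`. -/
theorem high_ge (p : ℝ) (hp : 2 ≤ p) (δ χ δ1 : ℝ) (hδ1 : δ ≤ δ1) (hχ : χ < 1)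
    (hd : 3 / 2 - 2 / p ≤ δ1) (F : ℝ → ℝ≥0∞) (hF : Measurable F) (hFp : ∫⁻ τ, F τ ^ p < ⊤) :
    ∃ (C : ℝ≥0∞), C ≠ ⊤ ∧
      ∀ s, 0 < s → ∫⁻ τ, ∫⁻ σ, F τ * F σ * KH δ χ s τ σ ≤ C * ENNReal.ofReal ((1 + s) ^ (δ1 - δ)) := by
  have hp0 : 0 < p := by linarith
  have hp1 : 0 ≤ 1 / p := by positivity
  have hpi : 1 / p ≤ 1 / 2 := one_div_le_one_div_of_le (by norm_num) hp
  have hp2 : 0 < 1 - 1 / p := by linarith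
  set I := ∫⁻ τ, F τ ^ p with hI
  set M := Mk χ 1 with hM
  have hMt : M < ⊤ := Mk_lt_top χ 1 le_rfl (by linarith)
  set P := 1 / (1 - 1 / p) with hP
  have hP0 : 0 < P := by positivity
  set G : ℝ → ℝ≥0∞ := (Ioi (1:ℝ)).indicator (fun σ => F σ * ENNReal.ofReal (σ ^ (-δ1))) with hG
  have hGm : Measurable G := Measurable.indicator (by fun_prop) measurableSet_Ioi
  have hGi : ∫⁻ σ, G σ ^ P < ⊤ := by
    set W : ℝ → ℝ≥0∞ := (Ioi (1:ℝ)).indicator (fun σ => ENNReal.ofReal (σ ^ (-(3/2) : ℝ))) with hW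
    have hWm : Measurable W := Measurable.indicator (by fun_prop) measurableSet_Ioi
    have hWi : ∫⁻ σ, W σ < ⊤ := by
      rw [hW, lintegral_indicator measurableSet_Ioi]
      exact (integrableOn_Ioi_rpow_of_lt (a := -(3/2)) (by norm_num) one_pos).lintegral_lt_top
    have c1 : 0 ≤ P / p := by positivity
    have c2 : 0 ≤ 1 - P / p := by
      rw [sub_nonneg, div_le_one hp0, hP, div_le_iff₀ hp2]
      have : p * (1 / p) = 1 := by field_simp
      nlinarith
    have hle : ∀ σ, G σ ^ P ≤ (F σ ^ p) ^ (P / p) * W σ ^ (1 - P / p) := by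
      intro σ
      by_cases hσ : σ ∈ Ioi (1:ℝ)
      · have hσ1 : 1 < σ := hσ
        have hσ0 : 0 < σ := by linarith
        rw [hG, hW, indicator_of_mem hσ, indicator_of_mem hσ, ENNReal.mul_rpow_of_nonneg _ _ hP0.le,
          ← ENNReal.rpow_mul, mul_div_cancel₀ _ hp0.ne', ENNReal.ofReal_rpow_of_pos (by positivity),
          ENNReal.ofReal_rpow_of_pos (by positivity), ← Real.rpow_mul hσ0.le, ← Real.rpow_mul hσ0.le]
        refine mul_le_mul' le_rfl (ENNReal.ofReal_le_ofReal ?_)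
        apply Real.rpow_le_rpow_of_exponent_le hσ1.le
        have e : 1 - P / p = P * (1 - 2 / p) := by
          have : p - 1 ≠ 0 := by linarith
          rw [hP]; field_simp; ring
        rw [e]
        have h2p : 2 / p = 2 * (1 / p) := by ring
        have : 3 / 2 * (1 - 2 / p) ≤ δ1 := by rw [h2p] at hd ⊢; linarith
        nlinarith
      · rw [hG, indicator_of_notMem hσ, ENNReal.zero_rpow_of_pos hP0]; exact zero_le
    refine (lintegral_mono hle).trans_lt ?_
    refine (ENNReal.lintegral_mul_norm_pow_le (by fun_prop) (by fun_prop) c1 c2 (by ring)).trans_lt ?_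
    exact ENNReal.mul_lt_top (ENNReal.rpow_lt_top_of_nonneg c1 hFp.ne) (ENNReal.rpow_lt_top_of_nonneg c2 hWi.ne)
  obtain ⟨A, hA, hAb⟩ := exp_poly_bound (δ1 - δ) (1/4) (by norm_num)
  refine ⟨ENNReal.ofReal A * ((M * I) ^ (1 / p) * (M * ∫⁻ σ, G σ ^ P) ^ (1 - 1 / p)), ?_, ?_⟩
  · refine ENNReal.mul_ne_top (by simp) (ENNReal.mul_ne_top ?_ ?_)
    · exact (ENNReal.rpow_lt_top_of_nonneg hp1 (ENNReal.mul_lt_top hMt hFp).ne).ne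
    · exact (ENNReal.rpow_lt_top_of_nonneg hp2.le (ENNReal.mul_lt_top hMt hGi).ne).ne
  · intro s hs
    have hk := Measurable.kk' χ (f := fun z : ℝ × ℝ => s) (g := fun z => z.1) (h := fun z => z.2) (by fun_prop) (by fun_prop) (by fun_prop)
    have h1 : ∫⁻ τ, ∫⁻ σ, F τ * F σ * KH δ χ s τ σ ≤
        ∫⁻ z : ℝ × ℝ, ENNReal.ofReal (A * (1 + s) ^ (δ1 - δ)) * (F z.1 * G z.2 * kk χ s z.1 z.2) := by
      rw [Measure.volume_eq_prod, lintegral_prod _ (by fun_prop)]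
      refine lintegral_mono fun τ => lintegral_mono fun σ => ?_
      simp only
      unfold KH
      split_ifs with h
      · obtain ⟨h1, h2, h3⟩ := h
        have hσ0 : 0 < σ := by linarith
        have hσ : σ ∈ Ioi (1:ℝ) := h1
        rw [hG, indicator_of_mem hσ]
        have : ENNReal.ofReal (σ ^ (-δ) * Real.exp (-(τ + σ - s) / 4)) ≤
            ENNReal.ofReal (A * (1 + s) ^ (δ1 - δ)) * ENNReal.ofReal (σ ^ (-δ1)) := by
          rw [← ENNReal.ofReal_mul (by positivity)]
          apply ENNReal.ofReal_le_ofReal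
          set u := τ + σ - s with hu
          have e : σ ^ (-δ) = σ ^ (δ1 - δ) * σ ^ (-δ1) := by
            rw [← Real.rpow_add hσ0]; congr 1; ring
          have h4 : σ ≤ (1 + s) * (1 + u) := by nlinarith
          have h5 : σ ^ (δ1 - δ) ≤ (1 + s) ^ (δ1 - δ) * (1 + u) ^ (δ1 - δ) := by
            rw [← Real.mul_rpow (by positivity) (by positivity)]
            exact Real.rpow_le_rpow hσ0.le h4 (by linarith)
          have h6 := hAb u h3.le
          rw [show -(1/4) * u = -u / 4 by ring] at h6
          calc _ = σ ^ (δ1 - δ) * Real.exp (-u/4) * σ ^ (-δ1) := by rw [e]; ring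
            _ ≤ ((1 + s) ^ (δ1 - δ) * (1 + u) ^ (δ1 - δ)) * Real.exp (-u/4) * σ ^ (-δ1) := by gcongr
            _ = (1 + s) ^ (δ1 - δ) * ((1 + u) ^ (δ1 - δ) * Real.exp (-u/4)) * σ ^ (-δ1) := by ring
            _ ≤ (1 + s) ^ (δ1 - δ) * A * σ ^ (-δ1) := by gcongr
            _ = _ := by ring
        calc _ ≤ F τ * F σ * (ENNReal.ofReal (A * (1 + s) ^ (δ1 - δ)) * ENNReal.ofReal (σ ^ (-δ1)) * kk χ s τ σ) := by gcongr
          _ = _ := by ring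
      · simp
    refine h1.trans ?_
    rw [lintegral_const_mul _ (by fun_prop), ENNReal.ofReal_mul hA.le, mul_right_comm]
    refine mul_le_mul' ?_ le_rfl
    refine mul_le_mul' le_rfl ?_
    have e : ∀ x y k : ℝ≥0∞, (x ^ p * k ^ (1:ℝ)) ^ (1 / p) * (y ^ P * k ^ (1:ℝ)) ^ (1 - 1 / p) = x * y * k := by
      intro x y k
      have ek : k ^ (1 / p) * k ^ (1 - 1 / p) = k := by
        rw [← ENNReal.rpow_add_of_nonneg _ _ hp1 hp2.le]; simp
      rw [ENNReal.rpow_one, ENNReal.mul_rpow_of_nonneg _ _ hp1, ENNReal.mul_rpow_of_nonneg _ _ hp2.le,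
        ← ENNReal.rpow_mul, ← ENNReal.rpow_mul, mul_one_div_cancel hp0.ne', hP, one_div_mul_cancel hp2.ne',
        ENNReal.rpow_one, ENNReal.rpow_one]
      calc _ = x * y * (k ^ (1 / p) * k ^ (1 - 1 / p)) := by ring
        _ = _ := by rw [ek]
    simp_rw [← e]
    refine (ENNReal.lintegral_mul_norm_pow_le (by fun_prop) (by fun_prop) hp1 hp2.le (by ring)).trans ?_
    have b1 := ENNReal.rpow_le_rpow (int_tau_F χ 1 le_rfl s (fun x => F x ^ p) (by fun_prop)) hp1
    have b2 := ENNReal.rpow_le_rpow (int_sig_F χ 1 le_rfl s (fun x => G x ^ P) (by fun_prop)) hp2.le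
    exact mul_le_mul' b1 b2

theorem measurable_Zop (β γ : ℝ) (X : ℝ → ℝ≥0∞) (hX : Measurable X) : Measurable (Zop β γ X) := by
  have h : Zop β γ X = fun ρ => ∫⁻ s, {x : ℝ × ℝ | x.1 < x.2 ∧ x.2 ≤ x.1 / β}.indicator
      (fun x => ENNReal.ofReal (Real.exp (x.1 ^ γ - x.2 ^ γ)) * X x.2) (ρ, s) := by
    funext ρ
    unfold Zop
    rw [← lintegral_indicator measurableSet_Ioc]
    refine lintegral_congr fun s => ?_
    simp [indicator]
  rw [h]
  refine Measurable.lintegral_prod_right (f := fun ρ s => {x : ℝ × ℝ | x.1 < x.2 ∧ x.2 ≤ x.1 / β}.indicator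
      (fun x => ENNReal.ofReal (Real.exp (x.1 ^ γ - x.2 ^ γ)) * X x.2) (ρ, s)) ?_
  refine Measurable.indicator (by fun_prop) ?_
  exact (measurableSet_lt measurable_fst measurable_snd).inter
    (measurableSet_le measurable_snd (measurable_fst.div_const β))

theorem high_all (n : ℕ) (hn : 1 ≤ n) (p γ β δ R : ℝ) (hp : 1 < p) (hγ : 1 < γ)
    (hβ : β ∈ Ioo (0:ℝ) 1) (hδ : 0 < δ) (hR0 : 0 ≤ R) (hR1 : R < 1)
    (hR : δ - n / 2 - 1 + 2 / p ≤ R) (hγR : 1 / p < (γ - 1) * (1 - R))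
    (hγ2 : n / 2 + 1 - 1 / p - δ < γ - 1)
    (F : ℝ → ℝ≥0∞) (hF : Measurable F) (hFp : ∫⁻ τ, F τ ^ p < ⊤) :
    ∫⁻ ρ in Ioi 0, Zop β γ (fun s => ∫⁻ τ, ∫⁻ σ, F τ * F σ *
      KH δ (max (-(((n:ℝ) - 2) / 2)) 0) s τ σ) ρ ^ p < ⊤ := by
  set χ : ℝ := max (-(((n:ℝ) - 2) / 2)) 0 with hχ
  have hn1 : (1:ℝ) ≤ n := by exact_mod_cast hn
  have hp0 : 0 < p := by linarith
  have hpi : 1 / p < 1 := by rw [div_lt_one hp0]; exact hp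
  have hpi0 : 0 < 1 / p := by positivity
  have h2p : 2 / p = 2 * (1 / p) := by ring
  have hγR' : 1 / p < γ - 1 := by nlinarith
  have hχ2 : χ ≤ 1 / 2 := max_le (by linarith) (by norm_num)
  have hχ0 : 0 ≤ χ := le_max_right _ _
  rcases le_or_gt 2 p with h2 | h2
  · obtain ⟨C, hC, hb⟩ := high_ge p h2 δ χ (max δ (3 / 2 - 2 / p)) (le_max_left _ _) (by linarith)
      (le_max_right _ _) F hF hFp
    refine Z_high p hp β γ hβ hγ (max δ (3 / 2 - 2 / p) - δ) 0 (by linarith [le_max_left δ (3 / 2 - 2 / p)]) le_rfl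
      zero_lt_one ?_ (fun _ => 0) _ measurable_const (by simp) C hC ?_
    · rcases max_choice δ (3 / 2 - 2 / p) with h | h <;> rw [h] <;> linarith
    · intro s hs
      simpa using hb s hs
  · -- choose the Hölder exponent
    have h2i : 1 / 2 < 1 / p := one_div_lt_one_div_of_lt hp0 h2
    obtain ⟨ib, hib0, hib1, hib2, hib3, hib4⟩ : ∃ ib : ℝ, 0 < ib ∧ ib ≤ 1 ∧ 2 * (1 - 1 / p) ≤ ib ∧
        χ < ib ∧ ib - 2 * (1 - 1 / p) ≤ R := by
      rcases Nat.lt_or_ge n 2 with hn2 | hn2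
      · have : n = 1 := by omega
        subst this
        norm_num at hR hχ
        refine ⟨max (2 * (1 - 1 / p)) (1 / 2 + min δ (1 / 2)), ?_, ?_, le_max_left _ _, ?_, ?_⟩
        · exact lt_of_lt_of_le (by positivity) (le_max_right _ _)
        · refine max_le (by linarith) (by linarith [min_le_right δ (1/2)])
        · refine lt_of_lt_of_le ?_ (le_max_right _ _)
          have : 0 < min δ (1/2) := lt_min hδ (by norm_num)
          linarith
        · rw [sub_le_iff_le_add]
          refine max_le (by linarith) ?_
          have := min_le_left δ (1/2)
          rw [h2p] at hR
          linarith
      · have hn3 : (2:ℝ) ≤ n := by exact_mod_cast hn2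
        have : χ = 0 := max_eq_right (by linarith)
        exact ⟨2 * (1 - 1 / p), by linarith, by linarith, le_rfl, by linarith, by linarith⟩
    have hb1 : 1 / (1 / ib) = ib := one_div_one_div ib
    obtain ⟨Q, C, hQm, hQi, hC, hb⟩ := high_lt p hp δ χ (1 / ib) hδ (by rw [le_div_iff₀ hib0]; linarith)
      (by rw [mul_one_div, div_lt_one hib0]; exact hib3) (by rw [hb1]; exact hib2) F hF hFp
    rw [hb1] at hb
    refine Z_high p hp β γ hβ hγ 0 (ib - 2 * (1 - 1 / p)) le_rfl (by linarith) (by linarith) ?_ Q _ hQm hQi C hC ?_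
    · nlinarith
    · intro s hs
      simpa using hb s

theorem kernel_split (q δ : ℝ) (hδ : 0 < δ) : ∃ C : ℝ≥0∞, C ≠ ⊤ ∧ ∀ f : ℝ → ℝ≥0∞, ∀ s τ σ : ℝ,
    0 < s → σ ≤ τ → ENNReal.ofReal (s ^ (δ + q + 1) * Real.exp s) * (f τ * f σ * triK q s τ σ) ≤
    C * ((Ioi (0:ℝ)).indicator (fun τ => f τ * ENNReal.ofReal (Real.exp τ * τ ^ (δ + q + 1))) τ *
      (Ioi (0:ℝ)).indicator (fun τ => f τ * ENNReal.ofReal (Real.exp τ * τ ^ (δ + q + 1))) σ * KL q δ s τ σ +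
      (Ioi (0:ℝ)).indicator (fun τ => f τ * ENNReal.ofReal (Real.exp τ * τ ^ (δ + q + 1))) τ *
      (Ioi (0:ℝ)).indicator (fun τ => f τ * ENNReal.ofReal (Real.exp τ * τ ^ (δ + q + 1))) σ * KH δ (max (-q) 0) s τ σ) := by
  obtain ⟨C2, hC2, hk2⟩ := ker_high q δ
  refine ⟨ENNReal.ofReal ((4 ^ |q| * 2 ^ δ) * (4 ^ |q| + C2)), by simp, fun f s τ σ hs hστ => ?_⟩
  by_cases ht : 0 < τ ∧ 0 < σ ∧ τ - σ < s ∧ σ - τ < s ∧ s < τ + σ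
  swap
  · rw [triK, if_neg ht]; simp
  rw [triK, if_pos ht]
  obtain ⟨hτ, hσ, t1, t2, t3⟩ := ht
  have hu : 0 < τ + σ - s := by linarith
  have hv : 0 < s + σ - τ := by linarith
  set a := δ + q + 1 with ha
  rw [indicator_of_mem (show τ ∈ Ioi (0:ℝ) from hτ), indicator_of_mem (show σ ∈ Ioi (0:ℝ) from hσ)]
  set F1 := f τ * ENNReal.ofReal (Real.exp τ * τ ^ a) with hF1
  set F2 := f σ * ENNReal.ofReal (Real.exp σ * σ ^ a) with hF2
  have hinv : ∀ x : ℝ, 0 < x → f x = f x * ENNReal.ofReal (Real.exp x * x ^ a) * ENNReal.ofReal (Real.exp (-x) * x ^ (-a)) := by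
    intro x hx
    rw [mul_assoc, ← ENNReal.ofReal_mul (by positivity)]
    have : Real.exp x * x ^ a * (Real.exp (-x) * x ^ (-a)) = 1 := by
      rw [Real.exp_neg, Real.rpow_neg hx.le]
      have : 0 < x ^ a := by positivity
      field_simp
    rw [this]; simp
  have hh : 0 ≤ hsq s τ σ := by
    unfold hsq
    have : 0 < s + τ - σ := by linarith
    have : 0 < s + τ + σ := by linarith
    positivity
  have hmain := ker_bound1 q δ s τ σ hδ hσ hστ hu hv
  rw [← ha] at hmain
  set Y := σ ^ (-q - δ) * ((τ + σ - s) * (s + σ - τ)) ^ q * Real.exp (-(τ + σ - s)) with hY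
  have step1 : ENNReal.ofReal (s ^ a * Real.exp s) * (f τ * f σ * ENNReal.ofReal (hsq s τ σ ^ q * τ * σ / s)) ≤
      F1 * F2 * ENNReal.ofReal ((4 ^ |q| * 2 ^ δ) * Y) := by
    refine le_trans (le_of_eq ?_) (mul_le_mul' le_rfl (ENNReal.ofReal_le_ofReal hmain))
    have hS : 0 ≤ s ^ a * Real.exp s := by positivity
    have hT : 0 ≤ Real.exp (-τ) * τ ^ (-a) := by positivity
    have hSg : 0 ≤ Real.exp (-σ) * σ ^ (-a) := by positivity
    rw [ENNReal.ofReal_mul (mul_nonneg (mul_nonneg hS hT) hSg), ENNReal.ofReal_mul (mul_nonneg hS hT),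
      ENNReal.ofReal_mul hS]
    conv_lhs => rw [hinv τ hτ, hinv σ hσ]
    ring
  refine step1.trans ?_
  have c1 : 0 < (4:ℝ) ^ |q| := by positivity
  have c2 : 0 < (2:ℝ) ^ δ := by positivity
  rw [← mul_add (F1 * F2), mul_left_comm _ (F1 * F2)]
  refine mul_le_mul' le_rfl ?_
  rcases le_or_gt σ 1 with h1 | h1
  · have hl := ker_low q δ (τ + σ - s) (s + σ - τ) σ hu hv (by ring)
    have e : KL q δ s τ σ = ENNReal.ofReal (σ ^ (-δ) * ((τ + σ - s) ^ q + (s + σ - τ) ^ q)) := by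
      unfold KL psiK
      rw [indicator_of_mem (show σ ∈ Ioc (0:ℝ) 1 from ⟨hσ, h1⟩),
        show σ + (τ - s) = τ + σ - s by ring, show σ - (τ - s) = s + σ - τ by ring,
        if_pos ⟨hu, by linarith⟩, if_pos ⟨hv, by linarith⟩, ← ENNReal.ofReal_add (by positivity) (by positivity),
        ← ENNReal.ofReal_mul (by positivity)]
    refine le_trans ?_ (mul_le_mul' le_rfl le_self_add)
    rw [e, ← ENNReal.ofReal_mul (by positivity)]
    apply ENNReal.ofReal_le_ofReal
    rw [mul_assoc (4 ^ |q| * 2 ^ δ)]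
    refine mul_le_mul_of_nonneg_left (hl.trans ?_) (by positivity)
    gcongr
    linarith
  · have hl := hk2 (τ + σ - s) (s + σ - τ) σ hu hv (by ring)
    have e : KH δ (max (-q) 0) s τ σ = ENNReal.ofReal (σ ^ (-δ) * Real.exp (-(τ + σ - s)/4) *
      (Real.exp (-(τ + σ - s)/8) * (τ + σ - s) ^ (-(max (-q) 0)) + Real.exp (-(s + σ - τ)/8) * (s + σ - τ) ^ (-(max (-q) 0)))) := by
      unfold KH kk phiK
      rw [if_pos ⟨h1, hστ, hu⟩, indicator_of_mem (show τ + σ - s ∈ Ioi (0:ℝ) from hu),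
        indicator_of_mem (show s + σ - τ ∈ Ioi (0:ℝ) from hv), ← ENNReal.ofReal_add (by positivity) (by positivity),
        ← ENNReal.ofReal_mul (by positivity)]
    refine le_trans ?_ (mul_le_mul' le_rfl le_add_self)
    rw [e, ← ENNReal.ofReal_mul (by positivity)]
    apply ENNReal.ofReal_le_ofReal
    rw [mul_assoc (4 ^ |q| * 2 ^ δ)]
    refine mul_le_mul_of_nonneg_left (hl.trans ?_) (by positivity)
    gcongr
    linarith

theorem lintegral_add_rpow (p : ℝ) (hp : 1 < p) (S : Set ℝ) (f g : ℝ → ℝ≥0∞) (hf : Measurable f)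
    (h1 : ∫⁻ x in S, f x ^ p < ⊤) (h2 : ∫⁻ x in S, g x ^ p < ⊤) : ∫⁻ x in S, (f x + g x) ^ p < ⊤ := by
  refine (lintegral_mono fun x => ENNReal.rpow_add_le_mul_rpow_add_rpow (f x) (g x) hp.le).trans_lt ?_
  rw [lintegral_const_mul' _ _ (ENNReal.rpow_lt_top_of_nonneg (by linarith) (by simp)).ne,
    lintegral_add_left (by fun_prop)]
  exact ENNReal.mul_lt_top (ENNReal.rpow_lt_top_of_nonneg (by linarith) (by simp)) (ENNReal.add_lt_top.2 ⟨h1, h2⟩)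

open Classical in
noncomputable def cX (q a : ℝ) (f : ℝ → ℝ≥0∞) (s : ℝ) : ℝ≥0∞ :=
  ENNReal.ofReal (s ^ a * Real.exp s) * ∫⁻ τ, ∫⁻ σ, f τ * f σ * (if σ ≤ τ then triK q s τ σ else 0)

theorem measurable_cX (q a : ℝ) (f : ℝ → ℝ≥0∞) (hf : Measurable f) : Measurable (cX q a f) := by
  classical
  unfold cX
  refine Measurable.mul (by fun_prop) ?_
  have h : Measurable (fun x : (ℝ × ℝ) × ℝ => f x.1.2 * f x.2 * (if x.2 ≤ x.1.2 then triK q x.1.1 x.1.2 x.2 else 0)) := by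
    refine Measurable.mul (by fun_prop) (Measurable.ite (measurableSet_le (by fun_prop) (by fun_prop)) ?_ measurable_const)
    exact (measurable_triK q).comp (g := fun x : ℝ × ℝ × ℝ => triK q x.1 x.2.1 x.2.2)
      (f := fun x : (ℝ × ℝ) × ℝ => (x.1.1, x.1.2, x.2)) (by fun_prop)
  have h2 : Measurable (fun z : ℝ × ℝ => ∫⁻ σ : ℝ, f z.2 * f σ * (if σ ≤ z.2 then triK q z.1 z.2 σ else 0)) :=
    h.lintegral_prod_right'
  have h3 : Measurable (fun s : ℝ => ∫⁻ τ : ℝ, ∫⁻ σ : ℝ, f τ * f σ * (if σ ≤ τ then triK q s τ σ else 0)) :=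
    h2.lintegral_prod_right'
  convert h3

theorem oneD (n : ℕ) (hn : 1 ≤ n) (p γ β δ R : ℝ) (hp : 1 < p) (hγ : 1 < γ)
    (hβ : β ∈ Ioo (0:ℝ) 1) (hδ : 0 < δ) (hδ2 : -(1 - 1 / p) < n / 2 - δ) (hR0 : 0 ≤ R) (hR1 : R < 1)
    (hR : δ - n / 2 - 1 + 2 / p ≤ R) (hγR : 1 / p < (γ - 1) * (1 - R))
    (hγ2 : n / 2 + 1 - 1 / p - δ < γ - 1)
    (f : ℝ → ℝ≥0∞) (hf : Measurable f)
    (hFp : ∫⁻ τ in Ioi (0:ℝ), (f τ * ENNReal.ofReal (Real.exp τ * τ ^ (δ + n / 2))) ^ p < ⊤) :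
    ∫⁻ ρ in Ioi 0, Zop β γ (cX (((n:ℝ) - 2) / 2) (δ + n / 2) f) ρ ^ p < ⊤ := by
  classical
  set q : ℝ := ((n:ℝ) - 2) / 2 with hq
  have hp0 : 0 < p := by linarith
  have hn1 : (1:ℝ) ≤ n := by exact_mod_cast hn
  have ha : δ + n / 2 = δ + q + 1 := by rw [hq]; ring
  rw [ha] at hFp ⊢
  set F : ℝ → ℝ≥0∞ := (Ioi (0:ℝ)).indicator (fun τ => f τ * ENNReal.ofReal (Real.exp τ * τ ^ (δ + q + 1))) with hF
  have hFm : Measurable F := Measurable.indicator (by fun_prop) measurableSet_Ioi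
  have hFp' : ∫⁻ τ, F τ ^ p < ⊤ := by
    rw [← lintegral_indicator measurableSet_Ioi] at hFp
    refine lt_of_le_of_lt (le_of_eq (lintegral_congr fun τ => ?_)) hFp
    by_cases h : τ ∈ Ioi (0:ℝ)
    · rw [hF, indicator_of_mem h, indicator_of_mem h]
    · rw [hF, indicator_of_notMem h, indicator_of_notMem h, ENNReal.zero_rpow_of_pos hp0]
  obtain ⟨l, hlm, hli, hlX⟩ := low_part p hp q δ (by rw [hq]; linarith) (by rw [hq]; linarith) F hFm hFp'
  have hZL := Z_low p hp β γ hγ F l _ hFm hlm hFp' hli hlX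
  have hZH := high_all n hn p γ β δ R hp hγ hβ hδ hR0 hR1 hR hγR hγ2 F hFm hFp'
  rw [← hq] at hZH
  set XL : ℝ → ℝ≥0∞ := fun s => ∫⁻ τ, ∫⁻ σ, F τ * F σ * KL q δ s τ σ with hXL
  set XH : ℝ → ℝ≥0∞ := fun s => ∫⁻ τ, ∫⁻ σ, F τ * F σ * KH δ (max (-q) 0) s τ σ with hXH
  have hXLm : Measurable XL := by
    have : XL = fun s => ∫⁻ τ, F τ * l (τ - s) := funext hlX
    rw [this]
    exact Measurable.lintegral_prod_right (f := fun s τ : ℝ => F τ * l (τ - s)) (by fun_prop)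
  obtain ⟨C, hC, hsplit⟩ := kernel_split q δ hδ
  have hKLm : ∀ s, Measurable (fun x : ℝ × ℝ => F x.1 * F x.2 * KL q δ s x.1 x.2) := by
    intro s
    have a1 := Measurable.psiK' q (f := fun x : ℝ × ℝ => x.2) (g := fun x => x.2 + (x.1 - s)) (by fun_prop) (by fun_prop)
    have a2 := Measurable.psiK' q (f := fun x : ℝ × ℝ => x.2) (g := fun x => x.2 - (x.1 - s)) (by fun_prop) (by fun_prop)
    have a3 : Measurable ((Ioc (0:ℝ) 1).indicator (fun σ => ENNReal.ofReal (σ ^ (-δ)))) :=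
      Measurable.indicator (by fun_prop) measurableSet_Ioc
    unfold KL
    fun_prop
  have hX : ∀ s, 0 < s → cX q (δ + q + 1) f s ≤ C * (XL s + XH s) := by
    intro s hs
    unfold cX
    rw [← lintegral_const_mul' _ _ (by simp)]
    simp_rw [← lintegral_const_mul' (ENNReal.ofReal (s ^ (δ + q + 1) * Real.exp s)) _ (by simp)]
    have e : C * (XL s + XH s) = ∫⁻ τ, ∫⁻ σ, C * (F τ * F σ * KL q δ s τ σ + F τ * F σ * KH δ (max (-q) 0) s τ σ) := by
      rw [hXL, hXH]
      simp only
      rw [← lintegral_add_left (hKLm s).lintegral_prod_right', ← lintegral_const_mul' _ _ hC]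
      refine lintegral_congr fun τ => ?_
      rw [lintegral_const_mul' _ _ hC, lintegral_add_left]
      exact (hKLm s).comp (f := fun σ : ℝ => (τ, σ)) (by fun_prop)
    rw [e]
    refine lintegral_mono fun τ => lintegral_mono fun σ => ?_
    simp only
    split_ifs with h
    · exact hsplit f s τ σ hs h
    · simp
  have hZ : ∀ ρ ∈ Ioi (0:ℝ), Zop β γ (cX q (δ + q + 1) f) ρ ^ p ≤ C ^ p * (Zop β γ XL ρ + Zop β γ XH ρ) ^ p := by
    intro ρ hρ
    have hρ : 0 < ρ := hρ
    rw [← ENNReal.mul_rpow_of_nonneg _ _ hp0.le]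
    refine ENNReal.rpow_le_rpow ?_ hp0.le
    unfold Zop
    rw [← lintegral_add_left (by fun_prop), ← lintegral_const_mul' _ _ hC]
    refine setLIntegral_mono' measurableSet_Ioc fun s hs => ?_
    refine (mul_le_mul' le_rfl (hX s (hρ.trans hs.1))).trans (le_of_eq ?_)
    ring
  refine (setLIntegral_mono' measurableSet_Ioi hZ).trans_lt ?_
  have hCp : C ^ p < ⊤ := ENNReal.rpow_lt_top_of_nonneg hp0.le hC
  rw [lintegral_const_mul' _ _ hCp.ne]
  exact ENNReal.mul_lt_top hCp (lintegral_add_rpow p hp _ _ _ (measurable_Zop β γ XL hXLm) hZL hZH)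

theorem norm_pairC_le {d : ℕ} (η : Ed d) (v : EdC d) : ‖pairC η v‖ ≤ d * (‖η‖ * ‖v‖) := by
  unfold pairC
  refine (norm_sum_le _ _).trans ?_
  have : ∀ i ∈ Finset.univ, ‖(η i : ℂ) * v i‖ ≤ ‖η‖ * ‖v‖ := by
    intro i _
    rw [norm_mul, Complex.norm_real]
    exact mul_le_mul (PiLp.norm_apply_le η i) (PiLp.norm_apply_le v i) (norm_nonneg _) (norm_nonneg _)
  refine (Finset.sum_le_sum this).trans ?_
  simp

theorem norm_toC {d : ℕ} (η : Ed d) : ‖toC η‖ = ‖η‖ := by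
  rw [EuclideanSpace.norm_eq, EuclideanSpace.norm_eq]
  congr 1
  refine Finset.sum_congr rfl fun i _ => ?_
  simp [toC]

theorem lerayC_eq {d : ℕ} (η : Ed d) (v : EdC d) :
    lerayC η v = v - (pairC η v / ((‖η‖ ^ 2 : ℝ) : ℂ)) • toC η := by
  ext i
  simp [lerayC, toC]

theorem norm_lerayC_le {d : ℕ} (η : Ed d) (hη : η ≠ 0) (v : EdC d) : ‖lerayC η v‖ ≤ (1 + d) * ‖v‖ := by
  rw [lerayC_eq]
  refine (norm_sub_le _ _).trans ?_
  have h0 : 0 < ‖η‖ := norm_pos_iff.2 hη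
  rw [norm_smul, norm_toC, norm_div, Complex.norm_real, Real.norm_of_nonneg (by positivity)]
  have h := norm_pairC_le η v
  have : ‖pairC η v‖ / ‖η‖ ^ 2 * ‖η‖ ≤ d * ‖v‖ := by
    rw [div_mul_eq_mul_div, div_le_iff₀ (by positivity)]
    calc _ ≤ d * (‖η‖ * ‖v‖) * ‖η‖ := by gcongr
      _ = _ := by ring
  linarith

theorem measurable_pairC {d : ℕ} : Measurable (fun z : Ed d × EdC d => pairC z.1 z.2) := by
  apply Continuous.measurable
  unfold pairC
  fun_prop

theorem measurable_lerayC {d : ℕ} : Measurable (fun z : Ed d × EdC d => lerayC z.1 z.2) := by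
  have : (fun z : Ed d × EdC d => lerayC z.1 z.2) =
      fun z => z.2 - (pairC z.1 z.2 / ((‖z.1‖ ^ 2 : ℝ) : ℂ)) • toC z.1 := by
    funext z; exact lerayC_eq _ _
  rw [this]
  have h1 : Measurable (fun z : Ed d × EdC d => toC z.1) := by
    apply Continuous.measurable
    unfold toC
    simp only [WithLp.equiv_symm_apply]
    fun_prop
  have h2 : Measurable (fun z : Ed d × EdC d => pairC z.1 z.2 / ((‖z.1‖ ^ 2 : ℝ) : ℂ)) :=
    measurable_pairC.div (by fun_prop)
  exact measurable_snd.sub (h2.smul h1)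

theorem measurable_renormKernelC (d : ℕ) (γ : ℝ) (ϑ : Ed d → EdC d) (h : Measurable ϑ) :
    Measurable (fun z : (Ed d × ℝ) × Ed d => renormKernelC d γ ϑ z.1.1 z.1.2 z.2) := by
  unfold renormKernelC
  have h1 : Measurable (fun z : (Ed d × ℝ) × Ed d => pairC z.1.1 (ϑ (z.1.2 • z.1.1 - z.2))) :=
    measurable_pairC.comp (g := fun z : Ed d × EdC d => pairC z.1 z.2)
      (f := fun z : (Ed d × ℝ) × Ed d => (z.1.1, ϑ (z.1.2 • z.1.1 - z.2))) (by fun_prop)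
  have h2 : Measurable (fun z : (Ed d × ℝ) × Ed d => lerayC z.1.1 (ϑ z.2)) :=
    measurable_lerayC.comp (g := fun z : Ed d × EdC d => lerayC z.1 z.2)
      (f := fun z : (Ed d × ℝ) × Ed d => (z.1.1, ϑ z.2)) (by fun_prop)
  have h3 : Measurable (fun z : (Ed d × ℝ) × Ed d =>
      z.1.2 ^ (-(γ - d - 1)) * Real.exp (‖z.1.1‖ ^ γ * (1 - z.1.2 ^ γ))) := by fun_prop
  exact h3.smul (h1.smul h2)

/-- The kernels of a.e. equal fields agree a.e., for every frequency and time. -/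
theorem kernel_congr (d : ℕ) (γ : ℝ) (ϑ ϑ' : Ed d → EdC d) (h : ϑ =ᵐ[volume] ϑ') (η : Ed d) (t : ℝ) :
    renormKernelC d γ ϑ η t =ᵐ[volume] renormKernelC d γ ϑ' η t := by
  have h2 := (Measure.measurePreserving_sub_left (volume : Measure (Ed d)) (t • η)).quasiMeasurePreserving.ae h
  filter_upwards [h, h2] with x hx hx2
  unfold renormKernelC
  rw [hx, hx2]

theorem kernel_congr_prod (d : ℕ) (γ : ℝ) (ϑ ϑ' : Ed d → EdC d) (h : ϑ =ᵐ[volume] ϑ') (η : Ed d) :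
    (fun q : ℝ × Ed d => renormKernelC d γ ϑ η q.1 q.2) =ᵐ[volume]
      (fun q : ℝ × Ed d => renormKernelC d γ ϑ' η q.1 q.2) := by
  have h1 : ∀ᵐ q : ℝ × Ed d, ϑ q.2 = ϑ' q.2 := Measure.quasiMeasurePreserving_snd.ae h
  have h2 : ∀ᵐ q : ℝ × Ed d, ϑ (q.1 • η - q.2) = ϑ' (q.1 • η - q.2) := by
    obtain ⟨s, hs, hsm, hs0⟩ := exists_measurable_superset_of_null (show volume {x | ϑ x = ϑ' x}ᶜ = 0 from h)
    have hm : MeasurableSet ((fun q : ℝ × Ed d => q.1 • η - q.2) ⁻¹' s) :=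
      (by fun_prop : Measurable (fun q : ℝ × Ed d => q.1 • η - q.2)) hsm
    have : (volume : Measure (ℝ × Ed d)) ((fun q : ℝ × Ed d => q.1 • η - q.2) ⁻¹' s) = 0 := by
      rw [Measure.volume_eq_prod, Measure.measure_prod_null hm]
      refine Filter.Eventually.of_forall fun t => ?_
      exact (Measure.measurePreserving_sub_left (volume : Measure (Ed d)) (t • η)).quasiMeasurePreserving.preimage_null hs0
    refine measure_mono_null (fun q hq => ?_) this
    exact hs hq
  filter_upwards [h1, h2] with q hq hq2
  unfold renormKernelC
  rw [hq, hq2]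

theorem renormC_congr (d : ℕ) (γ β : ℝ) (hβ : 0 < β) (ϑ ϑ' : Ed d → EdC d) (h : ϑ =ᵐ[volume] ϑ') :
    renormC d γ β ϑ =ᵐ[volume] renormC d γ β ϑ' := by
  have h1 := (Measure.quasiMeasurePreserving_smul (volume : Measure (Ed d)) (inv_ne_zero hβ.ne')).ae h
  filter_upwards [h1] with η hη
  unfold renormC
  rw [hη]
  congr 2
  refine integral_congr_ae (Filter.Eventually.of_forall fun t => ?_)
  exact integral_congr_ae (kernel_congr d γ ϑ ϑ' h η t)

theorem measurable_renormC (d : ℕ) (γ β : ℝ) (ϑ : Ed d → EdC d) (h : Measurable ϑ) :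
    Measurable (renormC d γ β ϑ) := by
  have h1 := (measurable_renormKernelC d γ ϑ h).stronglyMeasurable
  have h2 : StronglyMeasurable (fun z : Ed d × ℝ => ∫ x : Ed d, renormKernelC d γ ϑ z.1 z.2 x) :=
    h1.integral_prod_right'
  have h3 : StronglyMeasurable (fun η : Ed d => ∫ t in Set.Ioc (1 : ℝ) β⁻¹, ∫ x : Ed d, renormKernelC d γ ϑ η t x) :=
    h2.integral_prod_right'
  unfold renormC
  have h4 : Measurable (fun η : Ed d => β ^ (γ - d - 1) * Real.exp (‖η‖ ^ γ * (1 - β ^ (-γ)))) := by fun_prop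
  have h5 : Measurable (fun η : Ed d => ϑ (β⁻¹ • η)) := by fun_prop
  exact (h4.smul h5).add (h3.const_smul (Complex.I * (γ : ℂ))).measurable

theorem lintegral_scale (c : ℝ) (hc : 0 < c) (H : ℝ → ℝ≥0∞) :
    ENNReal.ofReal c * ∫⁻ t, H (t * c) = ∫⁻ s, H s := by
  have h := (Homeomorph.mulRight₀ c hc.ne').measurableEmbedding.lintegral_map (μ := volume) H
  have h2 := Real.smul_map_volume_mul_right hc.ne'
  conv_rhs => rw [← h2]
  rw [lintegral_smul_measure, abs_of_pos hc]
  simp only [smul_eq_mul]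
  congr 1
  exact h.symm

theorem polar_w (n : ℕ) (p ν : ℝ) (hp : 1 < p) : ∃ C : ℝ≥0∞, C ≠ ⊤ ∧ C ≠ 0 ∧ ∀ T : ℝ → ℝ≥0∞, Measurable T →
    ∫⁻ x : Ed (n+1), (T ‖x‖ * ENNReal.ofReal (uWeight ν x)) ^ p =
      C * ∫⁻ τ in Ioi (0:ℝ), (T τ * ENNReal.ofReal (Real.exp τ * τ ^ (ν + n / p))) ^ p := by
  obtain ⟨C, hC, hC0, h⟩ := polar_lintegral (n+1) (by omega)
  refine ⟨C, hC, hC0, fun T hT => ?_⟩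
  unfold uWeight
  rw [h (fun τ => (T τ * ENNReal.ofReal (Real.exp τ * τ ^ ν)) ^ p) (by fun_prop)]
  congr 1
  refine setLIntegral_congr_fun measurableSet_Ioi fun τ hτ => ?_
  have hτ' : 0 < τ := hτ
  have hp0 : 0 < p := by linarith
  simp only [add_tsub_cancel_right]
  rw [ENNReal.mul_rpow_of_nonneg _ _ hp0.le, ENNReal.mul_rpow_of_nonneg _ _ hp0.le, mul_assoc,
    ENNReal.ofReal_rpow_of_nonneg (by positivity) hp0.le, ENNReal.ofReal_rpow_of_nonneg (by positivity) hp0.le,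
    ← ENNReal.ofReal_mul (by positivity), Real.mul_rpow (by positivity) (by positivity),
    Real.mul_rpow (by positivity) (by positivity), ← Real.rpow_mul hτ'.le, ← Real.rpow_mul hτ'.le,
    ← Real.rpow_natCast, mul_assoc, ← Real.rpow_add hτ']
  congr 4
  field_simp

open Classical in
noncomputable def WX (q : ℝ) (f : ℝ → ℝ≥0∞) (s : ℝ) : ℝ≥0∞ :=
  ∫⁻ τ, ∫⁻ σ, f τ * f σ * (if σ ≤ τ then triK q s τ σ else 0)

theorem measurable_WX (q : ℝ) (f : ℝ → ℝ≥0∞) (hf : Measurable f) : Measurable (WX q f) := by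
  have h := measurable_cX q 0 f hf
  have : WX q f = fun s => ENNReal.ofReal (Real.exp (-s)) * cX q 0 f s := by
    funext s
    unfold WX cX
    rw [← mul_assoc, ← ENNReal.ofReal_mul (by positivity), Real.rpow_zero, one_mul, ← Real.exp_add]
    simp
  rw [this]
  fun_prop

theorem nonlin_bound (n : ℕ) (hn : 1 ≤ n) (γ β : ℝ) (hβ : β ∈ Ioo (0:ℝ) 1) :
    ∃ C : ℝ≥0∞, C ≠ ⊤ ∧ ∀ f : ℝ → ℝ≥0∞, Measurable f → ∀ ϑ : Ed (n+1) → EdC (n+1),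
      (∀ x, ‖ϑ x‖ₑ ≤ f ‖x‖) → ∀ η : Ed (n+1), η ≠ 0 →
      ∫⁻ t in Ioc (1:ℝ) β⁻¹, ∫⁻ x, ‖renormKernelC (n+1) γ ϑ η t x‖ₑ ≤
        C * Zop β γ (WX (((n:ℝ)-2)/2) f) ‖η‖ := by
  obtain ⟨Cc, hCc, hconv⟩ := conv_bound' n hn
  set c : ℝ := γ - ((n+1 : ℕ) : ℝ) - 1 with hc
  set d : ℝ := ((n+1 : ℕ) : ℝ) with hd
  have hd0 : 0 ≤ d := Nat.cast_nonneg _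
  have hβ0 := hβ.1
  set B : ℝ := β⁻¹ ^ |c| with hB
  have hB0 : 0 ≤ B := by positivity
  set K : ℝ := B * d * (1 + d) with hK
  have hK0 : 0 ≤ K := by positivity
  refine ⟨ENNReal.ofReal K * Cc, ENNReal.mul_ne_top (by simp) hCc, fun f hf ϑ hϑ η hη => ?_⟩
  have hρ : 0 < ‖η‖ := norm_pos_iff.2 hη
  set ρ := ‖η‖ with hρd
  set q : ℝ := ((n:ℝ)-2)/2 with hq
  have hpt : ∀ t ∈ Ioc (1:ℝ) β⁻¹, ∫⁻ x, ‖renormKernelC (n+1) γ ϑ η t x‖ₑ ≤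
      ENNReal.ofReal K * Cc * (ENNReal.ofReal ρ * (ENNReal.ofReal (Real.exp (ρ ^ γ - (t * ρ) ^ γ)) * WX q f (t * ρ))) := by
    intro t ht
    have ht0 : 0 < t := by linarith [ht.1]
    have htB : t ^ (-c) ≤ B := by
      calc t ^ (-c) ≤ t ^ |c| := Real.rpow_le_rpow_of_exponent_le ht.1.le (neg_le_abs c)
        _ ≤ B := Real.rpow_le_rpow ht0.le ht.2 (abs_nonneg c)
    set E := Real.exp (ρ ^ γ - (t * ρ) ^ γ) with hE
    have hEe : Real.exp (ρ ^ γ * (1 - t ^ γ)) = E := by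
      rw [hE, Real.mul_rpow ht0.le hρ.le]; congr 1; ring
    have hx : ∀ x, ‖renormKernelC (n+1) γ ϑ η t x‖ₑ ≤
        ENNReal.ofReal K * (ENNReal.ofReal ρ * ENNReal.ofReal E) * (f ‖x‖ * f ‖t • η - x‖) := by
      intro x
      have h1 : ‖renormKernelC (n+1) γ ϑ η t x‖ ≤ K * (ρ * E) * (‖ϑ x‖ * ‖ϑ (t • η - x)‖) := by
        unfold renormKernelC
        rw [norm_smul, norm_smul, norm_mul, Real.norm_of_nonneg (by positivity), Real.norm_of_nonneg (by positivity),
          ← hρd, hEe]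
        have e1 := norm_pairC_le η (ϑ (t • η - x))
        have e2 := norm_lerayC_le η hη (ϑ x)
        rw [← hd, ← hρd] at e1
        rw [← hd] at e2
        calc t ^ (-c) * E * (‖pairC η (ϑ (t • η - x))‖ * ‖lerayC η (ϑ x)‖)
            ≤ B * E * ((d * (ρ * ‖ϑ (t • η - x)‖)) * ((1 + d) * ‖ϑ x‖)) := by gcongr
          _ = _ := by rw [hK]; ring
      rw [← ofReal_norm]
      refine (ENNReal.ofReal_le_ofReal h1).trans ?_
      have hE0 : 0 ≤ E := (Real.exp_pos _).le
      rw [ENNReal.ofReal_mul (by positivity), ENNReal.ofReal_mul hK0, ENNReal.ofReal_mul hρ.le,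
        ENNReal.ofReal_mul (norm_nonneg _), ofReal_norm (ϑ x), ofReal_norm (ϑ (t • η - x))]
      exact mul_le_mul' le_rfl (mul_le_mul' (hϑ _) (hϑ _))
    refine (lintegral_mono hx).trans ?_
    have hne : t • η ≠ 0 := smul_ne_zero ht0.ne' hη
    have h2 := hconv f hf (t • η) hne
    rw [norm_smul, Real.norm_of_nonneg ht0.le, ← hρd] at h2
    rw [lintegral_const_mul _ (by fun_prop)]
    calc _ ≤ ENNReal.ofReal K * (ENNReal.ofReal ρ * ENNReal.ofReal E) * (Cc * WX q f (t * ρ)) := mul_le_mul' le_rfl h2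
      _ = _ := by ring
  refine (setLIntegral_mono' measurableSet_Ioc hpt).trans ?_
  have hW := measurable_WX q f hf
  rw [lintegral_const_mul _ (by fun_prop)]
  refine mul_le_mul' le_rfl ?_
  rw [lintegral_const_mul _ (by fun_prop)]
  unfold Zop
  rw [← lintegral_indicator measurableSet_Ioc, ← lintegral_indicator measurableSet_Ioc,
    ← lintegral_scale ρ hρ (indicator (Ioc ρ (ρ / β)) _)]
  refine mul_le_mul' le_rfl (lintegral_mono fun t => ?_)
  by_cases ht : t ∈ Ioc (1:ℝ) β⁻¹
  · have : t * ρ ∈ Ioc ρ (ρ / β) := by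
      refine ⟨by nlinarith [ht.1], ?_⟩
      rw [div_eq_mul_inv, mul_comm ρ]
      exact mul_le_mul_of_nonneg_right ht.2 hρ.le
    rw [indicator_of_mem ht, indicator_of_mem this]
  · rw [indicator_of_notMem ht]; exact zero_le

theorem Zop_weight (n : ℕ) (γ β a : ℝ) (ha : 0 ≤ a) (q : ℝ) (f : ℝ → ℝ≥0∞) (hf : Measurable f)
    (ρ : ℝ) (hρ : 0 < ρ) :
    Zop β γ (WX q f) ρ * ENNReal.ofReal (Real.exp ρ * ρ ^ a) ≤ Zop β γ (cX q a f) ρ := by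
  have hW := measurable_WX q f hf
  unfold Zop
  rw [← lintegral_mul_const _ (by fun_prop)]
  refine setLIntegral_mono' measurableSet_Ioc fun s hs => ?_
  have : cX q a f s = ENNReal.ofReal (s ^ a * Real.exp s) * WX q f s := rfl
  rw [this, mul_assoc, mul_comm (WX q f s)]
  refine mul_le_mul' le_rfl (mul_le_mul' (ENNReal.ofReal_le_ofReal ?_) le_rfl)
  rw [mul_comm]
  have := hs.1.le
  have hs0 : 0 < s := hρ.trans hs.1
  gcongr

theorem oneD_data (n : ℕ) (hn : 1 ≤ n) (γ : ℝ) (hγ : 1 < γ) (p r ν κ : ℝ)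
    (hp : 1 < p) (hr : 1 < r)
    (h1 : 1 / r = 2 / p + (2 * ν + κ) / ((n+1 : ℕ) : ℝ) - 1)
    (h3 : (((n+1 : ℕ) : ℝ) - 1) / 2 * (1 - 2 / p) < ν)
    (h4 : ν < ((n+1 : ℕ) : ℝ) * (p - 1) / p)
    (h7 : (((n+1 : ℕ) : ℝ) - 1) * (1 / r - 1 / p) ≤ ν + κ)
    (h9 : ((n+1 : ℕ) : ℝ) * (r - p) / r + p * (ν + κ + 1) < γ * p * (r - 1) / r)
    (β : ℝ) (hβ : β ∈ Ioo (0:ℝ) 1)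
    (f : ℝ → ℝ≥0∞) (hf : Measurable f)
    (hFp : ∫⁻ τ in Ioi (0:ℝ), (f τ * ENNReal.ofReal (Real.exp τ * τ ^ (ν + n / p))) ^ p < ⊤) :
    0 < ν + n / p ∧
    ∫⁻ ρ in Ioi 0, Zop β γ (cX (((n:ℝ) - 2) / 2) (ν + n / p) f) ρ ^ p < ⊤ := by
  have hn1 : (1:ℝ) ≤ n := by exact_mod_cast hn
  have hp0 : 0 < p := by linarith
  have hr0 : 0 < r := by linarith
  set P := 1 / p with hP
  set R := 1 / r with hR
  have hP0 : 0 < P := by positivity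
  have hR0 : 0 < R := by positivity
  have hR1 : R < 1 := by rw [hR, div_lt_one hr0]; exact hr
  have e2 : 2 / p = 2 * P := by rw [hP]; ring
  have en : n / p = n * P := by rw [hP]; ring
  have hpP : p * P = 1 := by rw [hP]; field_simp
  have hrR : r * R = 1 := by rw [hR]; field_simp
  push_cast at *
  rw [e2] at h1 h3
  have h4' : ν < (n + 1) * (1 - P) := by
    have : (n + 1) * (p - 1) / p = ((n:ℝ) + 1) * (1 - P) := by rw [hP]; field_simp
    linarith
  have hκ : 2 * ν + κ = (n + 1) * (R + 1 - 2 * P) := by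
    have : (2 * ν + κ) / ((n:ℝ) + 1) = R + 1 - 2 * P := by linarith
    rw [div_eq_iff (by positivity)] at this
    linarith
  have h9' : (n + 1) * (P - R) + (ν + κ + 1) < γ * (1 - R) := by
    have a1 : ((n:ℝ) + 1) * (r - p) / r = p * ((n + 1) * (P - R)) := by rw [hP, hR]; field_simp
    have a2 : γ * p * (r - 1) / r = p * (γ * (1 - R)) := by rw [hR]; field_simp
    rw [a1, a2, ← mul_add] at h9
    exact lt_of_mul_lt_mul_left h9 hp0.le
  have hae : ν + n / p = (ν + n * P - n / 2) + n / 2 := by rw [en]; ring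
  refine ⟨by rw [en]; nlinarith, ?_⟩
  rw [hae] at hFp ⊢
  have hnR : γ * R ≥ 0 := by positivity
  refine oneD n hn p γ β (ν + n * P - n / 2) R hp hγ hβ ?_ ?_ hR0.le hR1 ?_ ?_ ?_ f hf hFp
  · nlinarith
  · rw [← hP]; nlinarith
  · rw [e2]; nlinarith
  · rw [← hP]; nlinarith
  · rw [← hP]; nlinarith

/-- The radial class is described by one-dimensional profiles. -/
theorem memRL_of_profile (n : ℕ) (p ν : ℝ) (hp : 1 < p) (ϑ : Ed (n+1) → EdC (n+1))
    (hϑ : AEStronglyMeasurable ϑ volume) (T : ℝ → ℝ≥0∞) (hT : Measurable T)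
    (hb : ∀ᵐ x : Ed (n+1), ‖ϑ x‖ₑ ≤ T ‖x‖)
    (hTp : ∫⁻ x : Ed (n+1), (T ‖x‖ * ENNReal.ofReal (uWeight ν x)) ^ p < ⊤)
    (hfin : ∀ᵐ x : Ed (n+1), T ‖x‖ < ⊤) : MemRL (n+1) p ν ϑ := by
  have hp0 : 0 < p := by linarith
  refine ⟨hϑ, fun x => (T ‖x‖).toReal, by fun_prop, fun x y hxy => by simp only [hxy], ?_, ?_⟩
  · unfold wLpNorm
    refine ENNReal.rpow_lt_top_of_nonneg (by positivity) (ne_of_lt (lt_of_le_of_lt (lintegral_mono fun x => ?_) hTp))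
    have hu : 0 ≤ uWeight ν x := by unfold uWeight; positivity
    rw [abs_of_nonneg ENNReal.toReal_nonneg, ← Real.mul_rpow ENNReal.toReal_nonneg hu,
      ← ENNReal.ofReal_rpow_of_nonneg (mul_nonneg ENNReal.toReal_nonneg hu) hp0.le,
      ENNReal.ofReal_mul ENNReal.toReal_nonneg]
    exact ENNReal.rpow_le_rpow (mul_le_mul' ENNReal.ofReal_toReal_le le_rfl) hp0.le
  · filter_upwards [hb, hfin] with x h1 h2
    rw [← toReal_enorm]
    exact ENNReal.toReal_mono h2.ne h1

theorem ae_fin_of_profile (n : ℕ) (p ν : ℝ) (hp : 1 < p) (T : ℝ → ℝ≥0∞) (hT : Measurable T)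
    (hTp : ∫⁻ x : Ed (n+1), (T ‖x‖ * ENNReal.ofReal (uWeight ν x)) ^ p < ⊤) :
    ∀ᵐ x : Ed (n+1), T ‖x‖ < ⊤ := by
  have hp0 : 0 < p := by linarith
  have hm : Measurable (fun x : Ed (n+1) => (T ‖x‖ * ENNReal.ofReal (uWeight ν x)) ^ p) := by
    unfold uWeight; fun_prop
  have h0 : ∀ᵐ x : Ed (n+1), x ≠ 0 := by
    have : (volume : Measure (Ed (n+1))) {0} = 0 := measure_singleton 0
    exact measure_eq_zero_iff_ae_notMem.1 this
  filter_upwards [ae_lt_top hm hTp.ne, h0] with x hx hx0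
  by_contra hcon
  rw [not_lt_top_iff] at hcon
  have hu : 0 < uWeight ν x := by
    have := norm_pos_iff.2 hx0
    unfold uWeight; positivity
  rw [hcon, ENNReal.top_mul (by simpa using hu), ENNReal.top_rpow_of_pos hp0] at hx
  exact lt_irrefl _ hx

theorem main_aux (n : ℕ) (hn : 1 ≤ n) (γ : ℝ) (hγ : 1 < γ) (p ν : ℝ) (hp : 1 < p) (ha : 0 < ν + n / p)
    (β : ℝ) (hβ : β ∈ Ioo (0:ℝ) 1) (f : ℝ → ℝ≥0∞) (hf : Measurable f)
    (hFp : ∫⁻ τ in Ioi (0:ℝ), (f τ * ENNReal.ofReal (Real.exp τ * τ ^ (ν + n / p))) ^ p < ⊤)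
    (hZ : ∫⁻ ρ in Ioi 0, Zop β γ (cX (((n:ℝ) - 2) / 2) (ν + n / p) f) ρ ^ p < ⊤)
    (ϑ : Ed (n+1) → EdC (n+1)) (hϑ : Measurable ϑ) (hb : ∀ x, ‖ϑ x‖ₑ ≤ f ‖x‖) :
    (∀ᵐ η : Ed (n+1), RenormDefinedC (n+1) γ β ϑ η) ∧ MemRL (n+1) p ν (renormC (n+1) γ β ϑ) := by
  have hp0 : 0 < p := by linarith
  have hβ0 := hβ.1
  have hβ1 := hβ.2
  set a := ν + n / p with hadef
  set q : ℝ := ((n:ℝ) - 2) / 2 with hq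
  obtain ⟨C, hC, hN⟩ := nonlin_bound n hn γ β hβ
  obtain ⟨Cp, hCp, hCp0, hpol⟩ := polar_w n p ν hp
  set V : ℝ → ℝ≥0∞ := fun ρ => C * Zop β γ (WX q f) ρ with hV
  have hVm : Measurable V := (measurable_Zop β γ _ (measurable_WX q f hf)).const_mul C
  have hV1 : ∫⁻ ρ in Ioi (0:ℝ), (V ρ * ENNReal.ofReal (Real.exp ρ * ρ ^ a)) ^ p < ⊤ := by
    refine lt_of_le_of_lt (setLIntegral_mono' (g := fun ρ => C ^ p * Zop β γ (cX q a f) ρ ^ p) measurableSet_Ioi fun ρ hρ => ?_) ?_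
    · rw [← ENNReal.mul_rpow_of_nonneg _ _ hp0.le]
      refine ENNReal.rpow_le_rpow ?_ hp0.le
      rw [hV, mul_assoc]
      exact mul_le_mul' le_rfl (Zop_weight n γ β a ha.le q f hf ρ hρ)
    · have := ENNReal.rpow_lt_top_of_nonneg hp0.le hC
      rw [lintegral_const_mul' _ _ this.ne]
      exact ENNReal.mul_lt_top this hZ
  have hVx : ∫⁻ x : Ed (n+1), (V ‖x‖ * ENNReal.ofReal (uWeight ν x)) ^ p < ⊤ := by
    rw [hpol V hVm]; exact ENNReal.mul_lt_top hCp.lt_top hV1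
  have hVfin := ae_fin_of_profile n p ν hp V hVm hVx
  have h0 : ∀ᵐ x : Ed (n+1), x ≠ 0 := by
    have : (volume : Measure (Ed (n+1))) {0} = 0 := measure_singleton 0
    exact measure_eq_zero_iff_ae_notMem.1 this
  have hmk := measurable_renormKernelC (n+1) γ ϑ hϑ
  refine ⟨?_, ?_⟩
  · filter_upwards [hVfin, h0] with η hη hη0
    have hm : Measurable (fun q : ℝ × Ed (n+1) => renormKernelC (n+1) γ ϑ η q.1 q.2) :=
      hmk.comp (g := fun z : (Ed (n+1) × ℝ) × Ed (n+1) => renormKernelC (n+1) γ ϑ z.1.1 z.1.2 z.2)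
        (f := fun q : ℝ × Ed (n+1) => ((η, q.1), q.2)) (by fun_prop)
    refine ⟨hm.aestronglyMeasurable, ?_⟩
    unfold HasFiniteIntegral
    rw [Measure.volume_eq_prod, ← Measure.prod_restrict, Measure.restrict_univ,
      lintegral_prod _ (by fun_prop)]
    exact (hN f hf ϑ hb η hη0).trans_lt hη
  set c : ℝ := γ - ((n+1 : ℕ) : ℝ) - 1 with hc
  set T1 : ℝ → ℝ≥0∞ := fun ρ => ENNReal.ofReal (β ^ c) * f (ρ * β⁻¹) with hT1
  set T2 : ℝ → ℝ≥0∞ := fun ρ => ENNReal.ofReal γ * V ρ with hT2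
  have hT1m : Measurable T1 := by fun_prop
  have hT2m : Measurable T2 := by fun_prop
  have i1 : ∫⁻ ρ in Ioi (0:ℝ), (T1 ρ * ENNReal.ofReal (Real.exp ρ * ρ ^ a)) ^ p < ⊤ := by
    have hk : ENNReal.ofReal (β ^ c) ^ p < ⊤ := ENNReal.rpow_lt_top_of_nonneg hp0.le (by simp)
    set H : ℝ → ℝ≥0∞ := (Ioi (0:ℝ)).indicator fun τ => (f τ * ENNReal.ofReal (Real.exp τ * τ ^ a)) ^ p with hH
    have hHi : ∫⁻ τ, H τ < ⊤ := by rw [hH, lintegral_indicator measurableSet_Ioi]; exact hFp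
    have hbi : 0 < β⁻¹ := by positivity
    have hsc := lintegral_scale β⁻¹ hbi H
    have hHs : ∫⁻ t, H (t * β⁻¹) < ⊤ := by
      rw [← hsc] at hHi
      exact ENNReal.lt_top_of_mul_ne_top_right hHi.ne (by simpa using hβ0)
    refine lt_of_le_of_lt (b := ENNReal.ofReal (β ^ c) ^ p * ∫⁻ t, H (t * β⁻¹)) ?_ (ENNReal.mul_lt_top hk hHs)
    rw [← lintegral_const_mul' _ _ hk.ne]
    refine le_trans (setLIntegral_mono' measurableSet_Ioi fun ρ hρ => ?_) (setLIntegral_le_lintegral (Ioi 0) _)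
    have hρ0 : 0 < ρ := hρ
    have hm : ρ * β⁻¹ ∈ Ioi (0:ℝ) := by have : 0 < ρ * β⁻¹ := by positivity
                                        exact this
    rw [hH, indicator_of_mem hm, ← ENNReal.mul_rpow_of_nonneg _ _ hp0.le]
    refine ENNReal.rpow_le_rpow ?_ hp0.le
    rw [hT1, mul_assoc]
    refine mul_le_mul' le_rfl (mul_le_mul' le_rfl (ENNReal.ofReal_le_ofReal ?_))
    have : ρ ≤ ρ * β⁻¹ := le_mul_of_one_le_right hρ0.le (one_le_inv_iff₀.2 ⟨hβ0, hβ1.le⟩)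
    gcongr
  have i2 : ∫⁻ ρ in Ioi (0:ℝ), (T2 ρ * ENNReal.ofReal (Real.exp ρ * ρ ^ a)) ^ p < ⊤ := by
    have hk : ENNReal.ofReal γ ^ p < ⊤ := ENNReal.rpow_lt_top_of_nonneg hp0.le (by simp)
    simp only [hT2, mul_assoc]
    simp_rw [ENNReal.mul_rpow_of_nonneg (ENNReal.ofReal γ) _ hp0.le]
    rw [lintegral_const_mul' _ _ hk.ne]
    exact ENNReal.mul_lt_top hk hV1
  have hTm : Measurable (fun ρ => T1 ρ + T2 ρ) := by fun_prop
  have hTx : ∫⁻ x : Ed (n+1), ((fun ρ => T1 ρ + T2 ρ) ‖x‖ * ENNReal.ofReal (uWeight ν x)) ^ p < ⊤ := by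
    rw [hpol _ hTm]
    refine ENNReal.mul_lt_top hCp.lt_top ?_
    simp_rw [add_mul]
    exact lintegral_add_rpow p hp _ _ _ (by fun_prop) i1 i2
  refine memRL_of_profile n p ν hp _ (measurable_renormC (n+1) γ β ϑ hϑ).aestronglyMeasurable
    (fun ρ => T1 ρ + T2 ρ) hTm ?_ hTx (ae_fin_of_profile n p ν hp _ hTm hTx)
  filter_upwards [h0] with η hη
  unfold renormC
  refine (enorm_add_le _ _).trans (add_le_add ?_ ?_)
  · rw [enorm_smul]
    refine mul_le_mul' ?_ ((hb _).trans (le_of_eq ?_))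
    · rw [← ofReal_norm, Real.norm_of_nonneg (by positivity)]
      refine ENNReal.ofReal_le_ofReal (mul_le_of_le_one_right (by positivity) ?_)
      rw [Real.exp_le_one_iff]
      have : 1 ≤ β ^ (-γ) := Real.one_le_rpow_of_pos_of_le_one_of_nonpos hβ0 hβ1.le (by linarith)
      exact mul_nonpos_of_nonneg_of_nonpos (by positivity) (by linarith)
    · rw [norm_smul, Real.norm_of_nonneg (by positivity), mul_comm]
  · rw [enorm_smul]
    refine mul_le_mul' (le_of_eq ?_) ?_
    · rw [← ofReal_norm, norm_mul, Complex.norm_I, one_mul, Complex.norm_real, Real.norm_of_nonneg (by linarith)]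
    · refine (enorm_integral_le_lintegral_enorm _).trans ?_
      refine (lintegral_mono fun t => enorm_integral_le_lintegral_enorm _).trans ?_
      exact hN f hf ϑ hb η hη

/-- invariance of the space `RL^p_{u_ν}` under the renormalization
operator, under hypotheses (H1)–(H2). -/
theorem renorm_invariance_of_RL
    (d : ℕ) (hd : 2 ≤ d) (γ : ℝ) (hγ : 1 < γ) (p r ν κ : ℝ)
    (hp : 1 < p) (hr : 1 < r)
    (h1 : 1 / r = 2 / p + (2 * ν + κ) / d - 1)
    (h2 : κ < d / r)
    (h3 : (d - 1) / 2 * (1 - 2 / p) < ν)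
    (h4 : ν < d * (p - 1) / p)
    (h5 : p ≤ 2 * r)
    (h6 : 0 < max ν κ)
    (h7 : (d - 1) * (1 / r - 1 / p) ≤ ν + κ)
    (h8 : max 0 (d + p * ((γ - d - 1) + ν)) < d * (r - p) / r + p * (ν + κ + 1))
    (h9 : d * (r - p) / r + p * (ν + κ + 1) < γ * p * (r - 1) / r) :
    ∀ β ∈ Set.Ioo (0 : ℝ) 1, ∀ ϑ : Ed d → EdC d, MemRL d p ν ϑ →
      (∀ᵐ η : Ed d, RenormDefinedC d γ β ϑ η) ∧ MemRL d p ν (renormC d γ β ϑ) := by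
  intro β hβ ϑ hϑ
  obtain ⟨n, rfl⟩ : ∃ n, d = n + 1 := ⟨d - 1, by omega⟩
  have hn : 1 ≤ n := by omega
  have hp0 : 0 < p := by linarith
  obtain ⟨hϑm, g, hg, hgr, hgp, hle⟩ := hϑ
  set e0 : Ed (n+1) := EuclideanSpace.single 0 (1:ℝ) with he0
  have he1 : ‖e0‖ = 1 := by simp [he0]
  set f : ℝ → ℝ≥0∞ := fun t => ENNReal.ofReal |g (t • e0)| with hf
  have hfm : Measurable f := by fun_prop
  have hfg : ∀ x : Ed (n+1), f ‖x‖ = ENNReal.ofReal |g x| := by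
    intro x
    rw [hf]
    simp only
    rw [hgr (‖x‖ • e0) x (by rw [norm_smul, he1]; simp)]
  obtain ⟨Cp, hCp, hCp0, hpol⟩ := polar_w n p ν hp
  have hFp : ∫⁻ τ in Ioi (0:ℝ), (f τ * ENNReal.ofReal (Real.exp τ * τ ^ (ν + n / p))) ^ p < ⊤ := by
    have e : ∫⁻ x : Ed (n+1), (f ‖x‖ * ENNReal.ofReal (uWeight ν x)) ^ p < ⊤ := by
      unfold wLpNorm at hgp
      have := (ENNReal.rpow_lt_top_iff_of_pos (by positivity : 0 < 1 / p)).1 hgp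
      refine lt_of_le_of_lt (le_of_eq (lintegral_congr fun x => ?_)) this
      have hu : 0 ≤ uWeight ν x := by unfold uWeight; positivity
      rw [hfg, ← ENNReal.ofReal_mul (abs_nonneg _), ENNReal.ofReal_rpow_of_nonneg (by positivity) hp0.le,
        Real.mul_rpow (abs_nonneg _) hu]
    rw [hpol f hfm] at e
    exact ENNReal.lt_top_of_mul_ne_top_right e.ne hCp0
  obtain ⟨ha, hZ⟩ := oneD_data n hn γ hγ p r ν κ hp hr h1 h3 h4 h7 h9 β hβ f hfm hFp
  set h := hϑm.mk ϑ with hh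
  have hhm : Measurable h := hϑm.stronglyMeasurable_mk.measurable
  set ϑ' : Ed (n+1) → EdC (n+1) := {x | ‖h x‖ ≤ g x}.indicator h with hϑ'
  have hS : MeasurableSet {x | ‖h x‖ ≤ g x} := measurableSet_le (by fun_prop) hg
  have hm' : Measurable ϑ' := hhm.indicator hS
  have hb' : ∀ x, ‖ϑ' x‖ₑ ≤ f ‖x‖ := by
    intro x
    rw [hfg]
    by_cases hx : x ∈ {x | ‖h x‖ ≤ g x}
    · rw [hϑ', indicator_of_mem hx, ← ofReal_norm]
      exact ENNReal.ofReal_le_ofReal ((show ‖h x‖ ≤ g x from hx).trans (le_abs_self _))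
    · rw [hϑ', indicator_of_notMem hx]; simp
  have hae : ϑ =ᵐ[volume] ϑ' := by
    filter_upwards [hϑm.ae_eq_mk, hle] with x hx hx2
    have : x ∈ {x | ‖h x‖ ≤ g x} := by
      show ‖h x‖ ≤ g x
      rw [hh, ← hx]; exact hx2
    rw [hϑ', indicator_of_mem this, hx]
  obtain ⟨r1, r2⟩ := main_aux n hn γ hγ p ν hp ha β hβ f hfm hFp hZ ϑ' hm' hb'
  have hrc := renormC_congr (n+1) γ β hβ.1 ϑ ϑ' hae
  refine ⟨?_, ?_⟩
  · filter_upwards [r1] with η hη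
    exact Integrable.congr hη (ae_restrict_of_ae (kernel_congr_prod (n+1) γ ϑ ϑ' hae η).symm)
  · obtain ⟨m1, g2, m2, m3, m4, m5⟩ := r2
    refine ⟨m1.congr hrc.symm, g2, m2, m3, m4, ?_⟩
    filter_upwards [m5, hrc] with x hx hx2
    rw [hx2]; exact hx
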